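/- arXiv:math/0503115 — 3 statements merged into one kernel-verified Lean document; each statement's English description precedes it below -/
import Mathlib

section
/- For every integer n ≥ 2, σ_n = (n / 2^{n-1}) · Σ_{0 ≤ r < n/2} (-1)^r (n - 2r)^{n-1} / (r! (n - r)!). -/
open MeasureTheory

noncomputable def sigma (n : ℕ) : ℝ :=
  (2 / Real.pi) * ∫ t in Set.Ioi (0:ℝ), (Real.sin t / t) ^ n

open Filter Topology in
lemma sg_tendsto_exp (s : ℝ) (hs : 0 < s) :
    Tendsto (fun t : ℝ => Real.exp (-(s * t))) atTop (𝓝 0) :=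
  Real.tendsto_exp_neg_atTop_nhds_zero.comp (tendsto_id.const_mul_atTop hs)

open Filter Topology in
lemma sg_tendsto_mul_exp (s : ℝ) (hs : 0 < s) :
    Tendsto (fun t : ℝ => t * Real.exp (-(s * t))) atTop (𝓝 0) := by
  have h := (Real.tendsto_pow_mul_exp_neg_atTop_nhds_zero 1).comp
    (tendsto_id.const_mul_atTop hs : Tendsto (fun t : ℝ => s * t) atTop atTop)
  have h2 := h.const_mul (s⁻¹)
  rw [mul_zero] at h2
  refine h2.congr fun t => ?_
  simp only [Function.comp, pow_one]
  field_simp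

/-- Antiderivative in `t` used for the Laplace transform of `1 - cos`. -/
noncomputable def sgF (s t : ℝ) : ℝ :=
  -Real.exp (-(s * t)) - s * (Real.exp (-(s * t)) * (Real.sin t - s * Real.cos t)) / (1 + s ^ 2)

lemma sgF_deriv (s t : ℝ) :
    HasDerivAt (sgF s) (s * (1 - Real.cos t) * Real.exp (-(s * t))) t := by
  have h1 : HasDerivAt (fun t : ℝ => Real.exp (-(s * t))) (Real.exp (-(s * t)) * (-(s * 1))) t :=
    (((hasDerivAt_id t).const_mul s).neg).exp
  have h2 : HasDerivAt (fun t : ℝ => Real.sin t - s * Real.cos t)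
      (Real.cos t - s * (-Real.sin t)) t :=
    (Real.hasDerivAt_sin t).sub ((Real.hasDerivAt_cos t).const_mul s)
  have h3 := h1.neg.sub (((h1.mul h2).const_mul s).div_const (1 + s ^ 2))
  refine h3.congr_deriv ?_
  have : (1 + s ^ 2) ≠ 0 := by positivity
  field_simp
  ring

open Filter Topology in
lemma sgF_tendsto (s : ℝ) (hs : 0 < s) : Tendsto (sgF s) atTop (𝓝 0) := by
  have h1 := sg_tendsto_exp s hs
  have h2 : Tendsto (fun t : ℝ => Real.exp (-(s * t)) * (Real.sin t - s * Real.cos t))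
      atTop (𝓝 0) := by
    refine squeeze_zero_norm (a := fun t => Real.exp (-(s * t)) * (1 + s)) (fun t => ?_) ?_
    · rw [norm_mul, Real.norm_eq_abs, Real.abs_exp]
      gcongr
      rw [Real.norm_eq_abs]
      have a1 := Real.sin_le_one t
      have a2 := Real.neg_one_le_sin t
      have a3 := Real.cos_le_one t
      have a4 := Real.neg_one_le_cos t
      rw [abs_le]; constructor <;> nlinarith
    · simpa using h1.mul_const (1 + s)
  have h3 := h1.neg.sub ((h2.const_mul s).div_const (1 + s ^ 2))
  rw [mul_zero, zero_div, neg_zero, sub_zero] at h3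
  exact h3

lemma sg_inner_nonneg (s : ℝ) (hs : 0 < s) (t : ℝ) :
    0 ≤ s * (1 - Real.cos t) * Real.exp (-(s * t)) := by
  have := Real.cos_le_one t
  have : 0 ≤ 1 - Real.cos t := by linarith
  positivity

lemma sg_inner_t_int (s : ℝ) (hs : 0 < s) :
    IntegrableOn (fun t => s * (1 - Real.cos t) * Real.exp (-(s * t))) (Set.Ioi 0) :=
  integrableOn_Ioi_deriv_of_nonneg' (fun t _ => sgF_deriv s t)
    (fun t _ => sg_inner_nonneg s hs t) (sgF_tendsto s hs)

lemma sg_inner_t (s : ℝ) (hs : 0 < s) :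
    ∫ t in Set.Ioi (0:ℝ), s * (1 - Real.cos t) * Real.exp (-(s * t)) = (1 + s ^ 2)⁻¹ := by
  rw [integral_Ioi_of_hasDerivAt_of_nonneg' (fun t _ => sgF_deriv s t)
    (fun t _ => sg_inner_nonneg s hs t) (sgF_tendsto s hs)]
  have : (1 + s ^ 2) ≠ 0 := by positivity
  simp [sgF]
  field_simp
  ring

open Filter Topology in
lemma sg_inner_s (t : ℝ) (ht : 0 < t) :
    ∫ s in Set.Ioi (0:ℝ), s * (1 - Real.cos t) * Real.exp (-(s * t))
      = (1 - Real.cos t) / t ^ 2 := by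
  have hd : ∀ s : ℝ, HasDerivAt
      (fun s => -(1 - Real.cos t) * (s * Real.exp (-(t * s)) / t + Real.exp (-(t * s)) / t ^ 2))
      (s * (1 - Real.cos t) * Real.exp (-(s * t))) s := by
    intro s
    have h1 : HasDerivAt (fun s : ℝ => Real.exp (-(t * s)))
        (Real.exp (-(t * s)) * (-(t * 1))) s :=
      (((hasDerivAt_id s).const_mul t).neg).exp
    have h2 := (((((hasDerivAt_id s).mul h1).div_const t).add
      (h1.div_const (t ^ 2))).const_mul (-(1 - Real.cos t)))
    refine h2.congr_deriv ?_
    rw [mul_comm s t]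
    simp only [id]
    field_simp
    ring
  have hl : Tendsto
      (fun s => -(1 - Real.cos t) * (s * Real.exp (-(t * s)) / t + Real.exp (-(t * s)) / t ^ 2))
      atTop (𝓝 0) := by
    have := (((sg_tendsto_mul_exp t ht).div_const t).add
      ((sg_tendsto_exp t ht).div_const (t ^ 2))).const_mul (-(1 - Real.cos t))
    simpa using this
  rw [integral_Ioi_of_hasDerivAt_of_nonneg' (fun s _ => hd s)
    (fun s hs => sg_inner_nonneg s hs t) hl]
  simp
  field_simp
  ring

lemma sg_K : ∫ t in Set.Ioi (0:ℝ), (1 - Real.cos t) / t ^ 2 = Real.pi / 2 := by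
  have hi : Integrable (Function.uncurry
      (fun s t : ℝ => s * (1 - Real.cos t) * Real.exp (-(s * t))))
      ((volume.restrict (Set.Ioi (0:ℝ))).prod (volume.restrict (Set.Ioi (0:ℝ)))) := by
    rw [integrable_prod_iff]
    · constructor
      · filter_upwards [ae_restrict_mem measurableSet_Ioi] with s hs
        exact sg_inner_t_int s hs
      · refine (integrable_inv_one_add_sq.integrableOn (s := Set.Ioi 0)).congr ?_
        filter_upwards [ae_restrict_mem measurableSet_Ioi] with s hs
        rw [← sg_inner_t s hs]
        refine integral_congr_ae (Filter.Eventually.of_forall fun t => ?_)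
        simp only [Function.uncurry]
        rw [Real.norm_of_nonneg (sg_inner_nonneg s hs t)]
    · apply Continuous.aestronglyMeasurable
      simp only [Function.uncurry_def]
      fun_prop
  have h := integral_integral_swap hi
  rw [setIntegral_congr_fun (g := fun s => (1 + s ^ 2)⁻¹) measurableSet_Ioi
    (fun s hs => sg_inner_t s hs), integral_Ioi_inv_one_add_sq,
    setIntegral_congr_fun (g := fun t => (1 - Real.cos t) / t ^ 2) measurableSet_Ioi
    (fun s hs => sg_inner_s s hs)] at h
  rw [← h]; simp

lemma sg_Kb_int (b : ℝ) :
    IntegrableOn (fun t => (1 - Real.cos (b * t)) / t ^ 2) (Set.Ioi (0:ℝ)) := by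
  refine Integrable.mono' ((integrable_inv_one_add_sq.integrableOn (s := Set.Ioi 0)).const_mul
    (2 + b ^ 2)) ?_ ?_
  · exact (by fun_prop : Measurable fun t : ℝ =>
      (1 - Real.cos (b * t)) / t ^ 2).aestronglyMeasurable
  · filter_upwards [ae_restrict_mem measurableSet_Ioi] with t ht
    have ht : 0 < t := ht
    have h1 := Real.cos_le_one (b * t)
    have h2 := Real.neg_one_le_cos (b * t)
    have h3 := Real.one_sub_sq_div_two_le_cos (x := b * t)
    rw [Real.norm_of_nonneg (div_nonneg (by linarith) (by positivity)), ← div_eq_mul_inv,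
      div_le_div_iff₀ (by positivity) (by positivity)]
    have h4 : (1 - Real.cos (b * t)) * t ^ 2 ≤ 2 * t ^ 2 := by gcongr; linarith
    nlinarith [sq_nonneg (b * t)]

lemma sg_Kb_pos (b : ℝ) (hb : 0 < b) :
    ∫ t in Set.Ioi (0:ℝ), (1 - Real.cos (b * t)) / t ^ 2 = Real.pi / 2 * b := by
  have h := integral_comp_mul_left_Ioi (fun t => (1 - Real.cos t) / t ^ 2) 0 hb
  rw [mul_zero, sg_K] at h
  have h2 : ∀ t : ℝ, (1 - Real.cos (b * t)) / t ^ 2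
      = b ^ 2 * ((1 - Real.cos (b * t)) / (b * t) ^ 2) := by
    intro t
    rw [mul_pow]
    field_simp
  simp_rw [h2]
  rw [integral_const_mul, h, smul_eq_mul]
  field_simp

lemma sg_Kb (b : ℝ) :
    ∫ t in Set.Ioi (0:ℝ), (1 - Real.cos (b * t)) / t ^ 2 = Real.pi / 2 * |b| := by
  rcases lt_trichotomy b 0 with h | h | h
  · rw [abs_of_neg h, ← sg_Kb_pos (-b) (by linarith)]
    simp [neg_mul, Real.cos_neg]
  · subst h; simp
  · rw [abs_of_pos h, sg_Kb_pos b h]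

/-- Truncated powers. -/
noncomputable def sgP (k : ℕ) (x : ℝ) : ℝ := (max x 0) ^ k

lemma sgP_cont (k : ℕ) : Continuous (sgP k) := by
  unfold sgP; fun_prop

lemma sgP_integral (k : ℕ) (hk : 1 ≤ k) (c a b : ℝ) :
    ∫ x in a..b, sgP k (x + c) = (sgP (k + 1) (b + c) - sgP (k + 1) (a + c)) / (k + 1) := by
  rw [intervalIntegral.integral_comp_add_right (fun x => sgP k x)]
  rw [integral_eq_of_hasDerivAt_off_countable (fun x => sgP (k + 1) x / (k + 1)) (sgP k)
    (s := {0}) (Set.countable_singleton 0) ((sgP_cont (k + 1)).div_const _).continuousOn]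
  · ring
  · rintro x ⟨-, hx⟩
    have hx : x ≠ 0 := hx
    have hk' : (k : ℝ) + 1 ≠ 0 := by positivity
    rcases lt_or_gt_of_ne hx with h | h
    · have e : (fun x => sgP (k + 1) x / ((k : ℝ) + 1)) =ᶠ[nhds x] fun _ => 0 := by
        filter_upwards [eventually_lt_nhds h] with y hy
        simp [sgP, max_eq_right hy.le]
      have : sgP k x = 0 := by
        simp only [sgP, max_eq_right h.le]
        exact zero_pow (by omega)
      rw [this]
      exact (hasDerivAt_const x (0:ℝ)).congr_of_eventuallyEq e
    · have e : (fun x => sgP (k + 1) x / ((k : ℝ) + 1)) =ᶠ[nhds x]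
          fun y => y ^ (k + 1) / ((k : ℝ) + 1) := by
        filter_upwards [eventually_gt_nhds h] with y hy
        simp [sgP, max_eq_left hy.le]
      have h2 := (((hasDerivAt_pow (k + 1) x).div_const ((k : ℝ) + 1))).congr_of_eventuallyEq e
      refine h2.congr_deriv ?_
      simp only [sgP, max_eq_left h.le]
      push_cast
      try simp
      field_simp
  · exact (sgP_cont k).intervalIntegrable _ _

/-- The spline sum. -/
noncomputable def sgS (n : ℕ) (a : ℝ) : ℝ :=
  ∑ r ∈ Finset.range (n + 1), (-1 : ℝ) ^ r * (n.choose r : ℝ) * sgP (n - 1) (a + (n - 2 * r))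

lemma sgS_integral (n : ℕ) (hn : 2 ≤ n) (a : ℝ) :
    ∫ b in (a - 1)..(a + 1), sgS n b = sgS (n + 1) a / n := by
  unfold sgS
  rw [intervalIntegral.integral_finsetSum]
  swap
  · intro r _
    apply Continuous.intervalIntegrable
    have := sgP_cont (n - 1)
    fun_prop
  simp_rw [intervalIntegral.integral_const_mul]
  obtain ⟨m, rfl⟩ : ∃ m, n = m + 1 := ⟨n - 1, by omega⟩
  simp_rw [Nat.add_sub_cancel, sgP_integral m (by omega)]
  have hk' : (m : ℝ) + 1 ≠ 0 := by positivity
  rw [eq_div_iff (by push_cast; exact hk'), Finset.sum_mul]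
  set g : ℕ → ℝ := fun r => sgP (m + 1) (a + (((m + 1 + 1 : ℕ) : ℝ) - 2 * (r : ℝ))) with hg
  have hL : ∀ r : ℕ, (-1 : ℝ) ^ r * ((m + 1).choose r : ℝ) *
      ((sgP (m + 1) (a + 1 + (((m + 1 : ℕ) : ℝ) - 2 * r))
        - sgP (m + 1) (a - 1 + (((m + 1 : ℕ) : ℝ) - 2 * r))) / (m + 1)) * ((m + 1 : ℕ) : ℝ)
      = (-1 : ℝ) ^ r * ((m + 1).choose r : ℝ) * g r
        + (-1 : ℝ) ^ (r + 1) * ((m + 1).choose r : ℝ) * g (r + 1) := by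
    intro r
    have e1 : a + 1 + (((m + 1 : ℕ) : ℝ) - 2 * r)
      = a + (((m + 1 + 1 : ℕ) : ℝ) - 2 * (r : ℝ)) := by push_cast; ring
    have e2 : a - 1 + (((m + 1 : ℕ) : ℝ) - 2 * r)
      = a + (((m + 1 + 1 : ℕ) : ℝ) - 2 * ((r + 1 : ℕ) : ℝ)) := by push_cast; ring
    simp only [hg]
    rw [e1, e2]
    push_cast
    field_simp
    ring
  rw [Finset.sum_congr rfl fun r _ => hL r, Finset.sum_add_distrib]
  have hR : ∑ r ∈ Finset.range (m + 1 + 1 + 1), (-1 : ℝ) ^ r * ((m + 1 + 1).choose r : ℝ) * g r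
      = ∑ r ∈ Finset.range (m + 1 + 1), (-1 : ℝ) ^ r * ((m + 1).choose r : ℝ) * g r
        + ∑ r ∈ Finset.range (m + 1 + 1),
          (-1 : ℝ) ^ (r + 1) * ((m + 1).choose r : ℝ) * g (r + 1) := by
    have hz : ∑ r ∈ Finset.range (m + 1 + 1), (-1 : ℝ) ^ r * ((m + 1).choose r : ℝ) * g r
        = ∑ r ∈ Finset.range (m + 1 + 1 + 1), (-1 : ℝ) ^ r * ((m + 1).choose r : ℝ) * g r := by
      rw [Finset.sum_range_succ _ (m + 1 + 1), Nat.choose_succ_self]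
      simp
    rw [hz, Finset.sum_range_succ' _ (m + 1 + 1), Finset.sum_range_succ' _ (m + 1 + 1)]
    have aux : ∀ A B B' C D : ℝ, A = C + D → B = B' → A + B = C + B' + D := by
      intro A B B' C D h h'
      rw [h, h']; ring
    apply aux
    · rw [← Finset.sum_add_distrib]
      refine Finset.sum_congr rfl fun r _ => ?_
      rw [Nat.choose_succ_succ' (m + 1) r]
      push_cast
      ring
    · simp
  exact hR.symm

/-- The cosine transform. -/
noncomputable def sgJ (n : ℕ) (a : ℝ) : ℝ :=
  ∫ t in Set.Ioi (0:ℝ), (Real.sin t / t) ^ n * Real.cos (a * t)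

lemma sg_int (n : ℕ) (hn : 2 ≤ n) :
    IntegrableOn (fun t => (Real.sin t / t) ^ n) (Set.Ioi (0:ℝ)) := by
  refine Integrable.mono' ((integrable_inv_one_add_sq.integrableOn (s := Set.Ioi 0)).const_mul
    2) ?_ ?_
  · exact (by fun_prop : Measurable fun t : ℝ => (Real.sin t / t) ^ n).aestronglyMeasurable
  · filter_upwards [ae_restrict_mem measurableSet_Ioi] with t ht
    have ht : 0 < t := ht
    have h1 : |Real.sin t / t| ≤ 1 := by
      rw [abs_div, div_le_one (by positivity)]
      exact Real.abs_sin_le_abs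
    rw [norm_pow, Real.norm_eq_abs]
    refine (pow_le_pow_of_le_one (abs_nonneg _) h1 hn).trans ?_
    rw [sq_abs, div_pow, ← div_eq_mul_inv, div_le_div_iff₀ (by positivity) (by positivity)]
    have h2 := Real.sin_sq_le_one t
    have h3 : Real.sin t ^ 2 ≤ t ^ 2 := sq_le_sq.mpr Real.abs_sin_le_abs
    nlinarith [sq_nonneg t]

lemma sgJ_two (a : ℝ) : sgJ 2 a = Real.pi / (2 ^ 2 * (Nat.factorial 1 : ℝ)) * sgS 2 a := by
  have h : ∀ t : ℝ, (Real.sin t / t) ^ 2 * Real.cos (a * t)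
      = (1 / 4) * ((1 - Real.cos ((a + 2) * t)) / t ^ 2)
        + (1 / 4) * ((1 - Real.cos ((a - 2) * t)) / t ^ 2)
        - (1 / 2) * ((1 - Real.cos (a * t)) / t ^ 2) := by
    intro t
    rw [add_mul, sub_mul, Real.cos_add, Real.cos_sub, Real.cos_two_mul, div_pow, Real.sin_sq]
    ring
  unfold sgJ
  simp_rw [h]
  rw [integral_sub, integral_add, integral_const_mul, integral_const_mul, integral_const_mul,
    sg_Kb, sg_Kb, sg_Kb]
  · have e : ∀ x : ℝ, sgP 1 x = (|x| + x) / 2 := by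
      intro x
      simp only [sgP, pow_one]
      rcases le_total x 0 with h | h
      · rw [max_eq_right h, abs_of_nonpos h]; ring
      · rw [max_eq_left h, abs_of_nonneg h]; ring
    simp [sgS, Finset.sum_range_succ, e, ← sub_eq_add_neg]
    norm_num
    ring_nf
  · exact (sg_Kb_int _).const_mul _
  · exact (sg_Kb_int _).const_mul _
  · exact ((sg_Kb_int _).const_mul _).add ((sg_Kb_int _).const_mul _)
  · exact (sg_Kb_int _).const_mul _

lemma sgJ_succ (n : ℕ) (hn : 2 ≤ n) (a : ℝ) :
    sgJ (n + 1) a = (1 / 2) * ∫ b in (a - 1)..(a + 1), sgJ n b := by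
  unfold sgJ
  rw [intervalIntegral_integral_swap, ← integral_const_mul]
  · refine setIntegral_congr_fun measurableSet_Ioi fun t ht => ?_
    have ht : t ≠ 0 := ne_of_gt ht
    rw [intervalIntegral.integral_const_mul,
      intervalIntegral.integral_comp_mul_right (fun x => Real.cos x) ht, integral_cos,
      sub_mul, add_mul, Real.sin_add, Real.sin_sub, smul_eq_mul, pow_succ, one_mul]
    field_simp
    ring
  · have h1 : Integrable (fun _ : ℝ => (1:ℝ)) (volume.restrict (Set.uIoc (a - 1) (a + 1))) := by
      have : IsFiniteMeasure (volume.restrict (Set.uIoc (a - 1) (a + 1))) := by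
        rw [Set.uIoc]; infer_instance
      exact integrable_const _
    refine (h1.mul_prod (sg_int n hn)).mono ?_ ?_
    · simp only [Function.uncurry_def]
      exact (by fun_prop : Measurable fun p : ℝ × ℝ =>
        (Real.sin p.2 / p.2) ^ n * Real.cos (p.1 * p.2)).aestronglyMeasurable
    · refine Filter.Eventually.of_forall fun p => ?_
      simp only [Function.uncurry_def, one_mul]
      rw [norm_mul]
      exact mul_le_of_le_one_right (norm_nonneg _) (Real.abs_cos_le_one _)

lemma sgJ_eq (n : ℕ) (hn : 2 ≤ n) (a : ℝ) :
    sgJ n a = Real.pi / (2 ^ n * (Nat.factorial (n - 1) : ℝ)) * sgS n a := by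
  induction n, hn using Nat.le_induction generalizing a with
  | base => exact sgJ_two a
  | succ n hn ih =>
    rw [sgJ_succ n hn]
    simp_rw [ih]
    rw [intervalIntegral.integral_const_mul, sgS_integral n hn]
    obtain ⟨m, rfl⟩ : ∃ m, n = m + 1 := ⟨n - 1, by omega⟩
    simp only [Nat.add_sub_cancel, Nat.factorial_succ m]
    push_cast
    have : (m : ℝ) + 1 ≠ 0 := by positivity
    have := Nat.factorial_ne_zero m
    field_simp
    ring

theorem sigma_formula (n : ℕ) (hn : 2 ≤ n) :
    sigma n = ((n : ℝ) / 2 ^ (n - 1)) *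
      ∑ r ∈ Finset.range ((n + 1) / 2),
        (-1 : ℝ) ^ r * ((n : ℝ) - 2 * r) ^ (n - 1) /
          ((Nat.factorial r : ℝ) * (Nat.factorial (n - r) : ℝ)) := by
  have h := sgJ_eq n hn 0
  have h0 : sgJ n 0 = ∫ t in Set.Ioi (0:ℝ), (Real.sin t / t) ^ n := by simp [sgJ]
  rw [sigma, ← h0, h, sgS]
  rw [← Finset.sum_subset (s₁ := Finset.range ((n + 1) / 2))
    (Finset.range_subset_range.mpr (by omega))]
  · rw [Finset.mul_sum, Finset.mul_sum, Finset.mul_sum]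
    refine Finset.sum_congr rfl fun r hr => ?_
    have hr : r < (n + 1) / 2 := Finset.mem_range.mp hr
    have hr2 : (2 * r : ℝ) ≤ n := by exact_mod_cast (by omega : 2 * r ≤ n)
    rw [zero_add, sgP, max_eq_left (by linarith), Nat.cast_choose ℝ (by omega : r ≤ n)]
    obtain ⟨m, rfl⟩ : ∃ m, n = m + 1 := ⟨n - 1, by omega⟩
    simp only [Nat.add_sub_cancel]
    rw [Nat.factorial_succ m]
    have := Nat.factorial_ne_zero m
    have := Nat.factorial_ne_zero r
    have := Nat.factorial_ne_zero (m + 1 - r)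
    have := Real.pi_ne_zero
    push_cast
    field_simp
    ring
  · intro r _ hr
    have hr : ¬ r < (n + 1) / 2 := fun h => hr (Finset.mem_range.mpr h)
    have hr2 : (n : ℝ) ≤ 2 * r := by exact_mod_cast (by omega : n ≤ 2 * r)
    rw [zero_add, sgP, max_eq_right (by linarith), zero_pow (by omega), mul_zero]
end

section
/- For any unit vector s = (s₁,…,s_n) ∈ ℝⁿ (|s| = 1) with all coordinates nonzero, ‖s‖_∞ · ∫₀^∞ ∏_{i=1}^n (sin(s_i t)/(s_i t)) dt ≥ ∫₀^∞ (sin t / t)^n dt, with equality only if n = 2 or s/‖s‖_∞ is a vertex of the cube [−1,1]ⁿ. -/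
open MeasureTheory

noncomputable def maxNorm {n : ℕ} (x : EuclideanSpace ℝ (Fin n)) : ℝ :=
  ‖(WithLp.equiv 2 (Fin n → ℝ)) x‖

/-- cosine transform -/
noncomputable def ct (G : ℝ → ℝ) (x : ℝ) : ℝ := ∫ t in Set.Ioi (0:ℝ), Real.cos (x * t) * G t

structure Good (G : ℝ → ℝ) : Prop where
  cont : Continuous G
  int : IntegrableOn G (Set.Ioi 0)
  anti : AntitoneOn (ct G) (Set.Ici 0)

lemma ct_neg (G : ℝ → ℝ) (x : ℝ) : ct G (-x) = ct G x := by
  simp [ct]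

lemma ct_abs (G : ℝ → ℝ) (x : ℝ) : ct G |x| = ct G x := by
  rcases abs_choice x with h | h <;> rw [h]
  exact ct_neg G x

lemma Good.cosInt {G : ℝ → ℝ} (h : Good G) (x : ℝ) :
    IntegrableOn (fun t => Real.cos (x * t) * G t) (Set.Ioi 0) := by
  have hc := h.cont
  refine Integrable.mono h.int (by fun_prop) (ae_of_all _ fun t => ?_)
  rw [norm_mul]
  exact mul_le_of_le_one_left (norm_nonneg _) (Real.abs_cos_le_one _)

lemma Good.ctCont {G : ℝ → ℝ} (h : Good G) : Continuous (ct G) := by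
  have hc := h.cont
  unfold ct
  refine continuous_of_dominated (bound := fun t => ‖G t‖) (fun x => by fun_prop)
    (fun x => ae_of_all _ fun t => ?_) h.int.norm (ae_of_all _ fun t => by fun_prop)
  rw [norm_mul]
  exact mul_le_of_le_one_left (norm_nonneg _) (Real.abs_cos_le_one _)

lemma Good.anti_abs {G : ℝ → ℝ} (h : Good G) {x y : ℝ} (hxy : |x| ≤ |y|) : ct G y ≤ ct G x := by
  rw [← ct_abs G x, ← ct_abs G y]
  exact h.anti (Set.mem_Ici.2 (abs_nonneg _)) (Set.mem_Ici.2 (abs_nonneg _)) hxy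

lemma Good.mulInt {G : ℝ → ℝ} (h : Good G) (a : ℝ) :
    IntegrableOn (fun t => Real.sinc (a * t) * G t) (Set.Ioi 0) := by
  have hc := h.cont
  refine Integrable.mono h.int (by fun_prop) (ae_of_all _ fun t => ?_)
  rw [norm_mul]
  exact mul_le_of_le_one_left (norm_nonneg _) (Real.abs_sinc_le_one _)

lemma cos_sinc (a : ℝ) (ha : 0 < a) (x t : ℝ) (ht : 0 < t) :
    Real.cos (x * t) * Real.sinc (a * t) = 1 / (2 * a) * ∫ u in (x - a)..(x + a), Real.cos (u * t) := by
  rw [intervalIntegral.integral_comp_mul_right (fun u => Real.cos u) ht.ne', integral_cos,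
    Real.sinc_of_ne_zero (by positivity), add_mul, sub_mul, Real.sin_add, Real.sin_sub]
  simp only [smul_eq_mul]
  field_simp
  ring

lemma Good.ct_mul {G : ℝ → ℝ} (h : Good G) (a : ℝ) (ha : 0 < a) (x : ℝ) :
    ct (fun t => Real.sinc (a * t) * G t) x = 1 / (2 * a) * ∫ u in (x - a)..(x + a), ct G u := by
  have hc := h.cont
  unfold ct
  rw [intervalIntegral_integral_swap, ← integral_const_mul]
  · refine setIntegral_congr_fun measurableSet_Ioi fun t ht => ?_
    simp only
    rw [← mul_assoc, cos_sinc a ha x t ht, intervalIntegral.integral_mul_const]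
    ring
  · have h1 : Integrable (fun z : ℝ × ℝ => (1:ℝ) * G z.2)
      ((volume.restrict (Set.uIoc (x - a) (x + a))).prod (volume.restrict (Set.Ioi 0))) := by
      refine Integrable.mul_prod (f := fun _ : ℝ => (1:ℝ)) ?_ h.int
      rw [Set.uIoc_of_le (by linarith)]
      exact integrable_const _
    refine Integrable.mono h1 (Continuous.aestronglyMeasurable (by unfold Function.uncurry; fun_prop)) (ae_of_all _ fun z => ?_)
    simp only [Function.uncurry, norm_mul]
    exact mul_le_mul_of_nonneg_right (by simpa using Real.abs_cos_le_one _) (norm_nonneg _)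

lemma Good.ct_sub {G : ℝ → ℝ} (h : Good G) (a : ℝ) (ha : 0 < a) (x y : ℝ) :
    ct (fun t => Real.sinc (a * t) * G t) x - ct (fun t => Real.sinc (a * t) * G t) y
     = 1 / (2 * a) * ∫ u in x..y, (ct G (u - a) - ct G (u + a)) := by
  have hc := h.ctCont
  rw [h.ct_mul a ha, h.ct_mul a ha, intervalIntegral.integral_sub
    (Continuous.intervalIntegrable (by fun_prop) _ _) (Continuous.intervalIntegrable (by fun_prop) _ _),
    intervalIntegral.integral_comp_sub_right (fun u => ct G u),
    intervalIntegral.integral_comp_add_right (fun u => ct G u), ← mul_sub]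
  congr 1
  have hi : ∀ p q, IntervalIntegrable (ct G) volume p q := fun p q => hc.intervalIntegrable p q
  have e1 := intervalIntegral.integral_add_adjacent_intervals (hi (x - a) (y-a)) (hi (y-a) (y+a))
  have e2 := intervalIntegral.integral_add_adjacent_intervals (hi (x - a) (x+a)) (hi (x+a) (y+a))
  linarith

lemma Good.step {G : ℝ → ℝ} (h : Good G) (a : ℝ) (ha : 0 < a) :
    Good (fun t => Real.sinc (a * t) * G t) := by
  have hc := h.cont
  refine ⟨by fun_prop, h.mulInt a, fun x hx y hy hxy => ?_⟩
  rw [← sub_nonneg, h.ct_sub a ha]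
  refine mul_nonneg (by positivity) (intervalIntegral.integral_nonneg hxy fun u hu => ?_)
  rw [sub_nonneg]
  apply h.anti_abs
  have : 0 ≤ u := le_trans hx hu.1
  rw [abs_of_nonneg (by linarith : 0 ≤ u + a), abs_le]
  constructor <;> linarith

lemma Good.step_strict {G : ℝ → ℝ} (h : Good G) (hs : StrictAntiOn (ct G) (Set.Icc 0 1)) :
    StrictAntiOn (ct (fun t => Real.sinc (1 * t) * G t)) (Set.Icc 0 1) := by
  intro x hx y hy hxy
  have hc := h.ctCont
  rw [← sub_pos, h.ct_sub 1 one_pos]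
  refine mul_pos (by norm_num) (intervalIntegral.intervalIntegral_pos_of_pos_on
    (Continuous.intervalIntegrable (by fun_prop) _ _) (fun u hu => ?_) hxy)
  have hu0 : 0 < u := lt_of_le_of_lt hx.1 hu.1
  have hu1 : u < 1 := lt_of_lt_of_le hu.2 hy.2
  have e1 : ct G (u - 1) = ct G (1 - u) := by rw [← ct_neg]; congr 1; ring
  have e2 : ct G 1 < ct G (1 - u) := hs ⟨by linarith, by linarith⟩ ⟨by norm_num, le_rfl⟩ (by linarith)
  have e3 : ct G (u + 1) ≤ ct G 1 := h.anti (by simp) (Set.mem_Ici.2 (by linarith)) (by linarith)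
  linarith

lemma Good.int_eq {G : ℝ → ℝ} (h : Good G) (a : ℝ) (ha : 0 < a) :
    ∫ t in Set.Ioi (0:ℝ), Real.sinc (a * t) * G t = ∫ u in (0:ℝ)..1, ct G (a * u) := by
  have h1 : ∫ t in Set.Ioi (0:ℝ), Real.sinc (a * t) * G t = ct (fun t => Real.sinc (a * t) * G t) 0 := by
    simp [ct]
  have hc := h.ctCont
  have hi : ∀ p q, IntervalIntegrable (ct G) volume p q := fun p q => hc.intervalIntegrable p q
  rw [h1, h.ct_mul a ha, intervalIntegral.integral_comp_mul_left (fun u => ct G u) ha.ne',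
    ← intervalIntegral.integral_add_adjacent_intervals (hi (0-a) 0) (hi 0 (0+a))]
  have h2 := intervalIntegral.integral_comp_neg (a := 0) (b := a) (ct G)
  simp only [ct_neg, neg_zero] at h2
  simp only [zero_sub, ← h2, zero_add, mul_zero, mul_one, smul_eq_mul]
  field_simp
  ring

lemma Good.mono {G : ℝ → ℝ} (h : Good G) (a : ℝ) (ha : 0 < a) (ha1 : a ≤ 1) :
    ∫ t in Set.Ioi (0:ℝ), Real.sinc (1 * t) * G t ≤ ∫ t in Set.Ioi (0:ℝ), Real.sinc (a * t) * G t := by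
  have hc := h.ctCont
  rw [h.int_eq a ha, h.int_eq 1 one_pos]
  refine intervalIntegral.integral_mono_on zero_le_one (Continuous.intervalIntegrable (by fun_prop) _ _)
    (Continuous.intervalIntegrable (by fun_prop) _ _) fun u hu => h.anti_abs ?_
  rw [abs_mul, abs_mul]
  refine mul_le_mul_of_nonneg_right ?_ (abs_nonneg _)
  rw [abs_of_pos ha]; simpa

lemma Good.mono_strict {G : ℝ → ℝ} (h : Good G) (hs : StrictAntiOn (ct G) (Set.Icc 0 1))
    (a : ℝ) (ha : 0 < a) (ha1 : a < 1) :
    ∫ t in Set.Ioi (0:ℝ), Real.sinc (1 * t) * G t < ∫ t in Set.Ioi (0:ℝ), Real.sinc (a * t) * G t := by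
  have hc := h.ctCont
  rw [h.int_eq a ha, h.int_eq 1 one_pos, ← sub_pos, ← intervalIntegral.integral_sub
    (Continuous.intervalIntegrable (by fun_prop) _ _) (Continuous.intervalIntegrable (by fun_prop) _ _)]
  refine intervalIntegral.intervalIntegral_pos_of_pos_on
    (Continuous.intervalIntegrable (by fun_prop) _ _) (fun u hu => ?_) one_pos
  rw [sub_pos]
  have h3 : a * u < u := by nlinarith [hu.1]
  have h4 : 0 < a * u := mul_pos ha hu.1
  exact hs ⟨h4.le, by linarith [hu.2]⟩ ⟨by linarith, by linarith [hu.2]⟩ (by linarith)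

lemma sinc_sq_le (x : ℝ) : Real.sinc x ^ 2 ≤ 2 * (1 + x ^ 2)⁻¹ := by
  rw [← div_eq_mul_inv, le_div_iff₀ (by positivity)]
  have h1 : Real.sinc x ^ 2 ≤ 1 := by
    rw [sq_le_one_iff_abs_le_one]; exact Real.abs_sinc_le_one x
  have h2 : Real.sinc x ^ 2 * x ^ 2 ≤ 1 := by
    by_cases hx : x = 0
    · simp [hx]
    · rw [Real.sinc_of_ne_zero hx, div_pow, div_mul_cancel₀ _ (by positivity)]
      exact Real.sin_sq_le_one x
  linarith

lemma sinc_sq_int (a : ℝ) (ha : a ≠ 0) : Integrable (fun t => Real.sinc (a * t) ^ 2) := by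
  have h : Integrable (fun t => Real.sinc t ^ 2) := by
    refine Integrable.mono' (integrable_inv_one_add_sq.const_mul 2) (by fun_prop) (ae_of_all _ fun t => ?_)
    rw [Real.norm_of_nonneg (by positivity)]
    exact sinc_sq_le t
  exact h.comp_mul_left' ha

noncomputable def HH : ℝ := ∫ t in Set.Ioi (0:ℝ), Real.sinc t ^ 2

lemma HH_pos : 0 < HH := by
  unfold HH
  have hi : IntegrableOn (fun t => Real.sinc t ^ 2) (Set.Ioi 0) := by
    simpa using (sinc_sq_int 1 one_ne_zero).integrableOn
  rw [setIntegral_pos_iff_support_of_nonneg_ae (ae_of_all _ fun t => by positivity) hi]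
  refine lt_of_lt_of_le ?_ (measure_mono (s := Set.Ioo 0 1) fun t ht => ⟨?_, ht.1⟩)
  · simp
  · have : 0 < Real.sin t := Real.sin_pos_of_pos_of_lt_pi ht.1 (by linarith [ht.2, Real.pi_gt_three])
    have ht0 := ht.1
    rw [Function.mem_support, Real.sinc_of_ne_zero ht0.ne']
    positivity

lemma psi_int (c : ℝ) : IntegrableOn (fun t => c ^ 2 / 2 * Real.sinc (c / 2 * t) ^ 2) (Set.Ioi 0) := by
  by_cases hc : c = 0
  · simp [hc]
  · exact ((sinc_sq_int (c/2) (by simpa using hc)).const_mul _).integrableOn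

lemma psi_val (c : ℝ) : ∫ t in Set.Ioi (0:ℝ), c ^ 2 / 2 * Real.sinc (c / 2 * t) ^ 2 = |c| * HH := by
  by_cases hc : c = 0
  · simp [hc]
  · have hc' : 0 < |c| := abs_pos.2 hc
    have : ∀ t, Real.sinc (c / 2 * t) = Real.sinc (|c| / 2 * t) := by
      intro t
      rcases abs_choice c with h | h <;> rw [h]
      rw [← Real.sinc_neg]; congr 1; ring
    simp only [this]
    rw [integral_const_mul, integral_comp_mul_left_Ioi (fun t => Real.sinc t ^ 2) 0 (by positivity : 0 < |c| / 2),
      ← sq_abs, mul_zero]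
    simp only [smul_eq_mul]
    rw [← HH]
    field_simp

lemma psi_eq (c t : ℝ) (ht : 0 < t) :
    c ^ 2 / 2 * Real.sinc (c / 2 * t) ^ 2 = (1 - Real.cos (c * t)) / t ^ 2 := by
  by_cases hc : c = 0
  · simp [hc]
  · rw [Real.sinc_of_ne_zero (by positivity)]
    have : Real.cos (c * t) = 1 - 2 * Real.sin (c / 2 * t) ^ 2 := by
      rw [show c * t = 2 * (c / 2 * t) by ring, Real.cos_two_mul, Real.cos_sq']; ring
    rw [this]
    field_simp
    ring

lemma base_eq (a b : ℝ) (ha : 0 < a) (hb : 0 < b) (x : ℝ) :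
    ct (fun t => Real.sinc (a * t) * Real.sinc (b * t)) x =
      HH / (4 * a * b) * (|a + b + x| + |a + b - x| - |a - b + x| - |a - b - x|) := by
  have key : ∀ t ∈ Set.Ioi (0:ℝ), Real.cos (x * t) * (Real.sinc (a * t) * Real.sinc (b * t)) =
     1 / (4 * a * b) * (((((a + b + x) ^ 2 / 2 * Real.sinc ((a + b + x) / 2 * t) ^ 2)
      + ((a + b - x) ^ 2 / 2 * Real.sinc ((a + b - x) / 2 * t) ^ 2))
      - ((a - b + x) ^ 2 / 2 * Real.sinc ((a - b + x) / 2 * t) ^ 2))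
      - ((a - b - x) ^ 2 / 2 * Real.sinc ((a - b - x) / 2 * t) ^ 2)) := by
    intro t ht
    have ht : 0 < t := ht
    rw [psi_eq _ t ht, psi_eq _ t ht, psi_eq _ t ht, psi_eq _ t ht,
      Real.sinc_of_ne_zero (by positivity), Real.sinc_of_ne_zero (by positivity)]
    simp only [add_mul, sub_mul, Real.cos_add, Real.cos_sub, Real.sin_add, Real.sin_sub]
    field_simp
    ring
  unfold ct
  rw [setIntegral_congr_fun measurableSet_Ioi key, integral_const_mul, integral_sub, integral_sub,
    integral_add, psi_val, psi_val, psi_val, psi_val]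
  · ring
  · exact psi_int _
  · exact psi_int _
  · exact (psi_int _).add (psi_int _)
  · exact psi_int _
  · exact ((psi_int _).add (psi_int _)).sub (psi_int _)
  · exact psi_int _

lemma base_good (a b : ℝ) (ha : 0 < a) (hb : 0 < b) :
    Good (fun t => Real.sinc (a * t) * Real.sinc (b * t)) := by
  refine ⟨by fun_prop, ?_, fun x hx y hy hxy => ?_⟩
  · refine Integrable.mono' (((sinc_sq_int a ha.ne').add (sinc_sq_int b hb.ne')).integrableOn)
      (by fun_prop) (ae_of_all _ fun t => ?_)
    rw [Real.norm_eq_abs, abs_le]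
    simp only [Pi.add_apply]
    constructor <;> nlinarith [sq_nonneg (Real.sinc (a * t) + Real.sinc (b * t)), sq_nonneg (Real.sinc (a * t) - Real.sinc (b * t)), sq_nonneg (Real.sinc (a * t)), sq_nonneg (Real.sinc (b * t))]
  · rw [base_eq a b ha hb, base_eq a b ha hb]
    have := HH_pos
    refine mul_le_mul_of_nonneg_left ?_ (by positivity)
    have hx : 0 ≤ x := hx
    grind

lemma base_strict : StrictAntiOn (ct (fun t => Real.sinc (1 * t) * Real.sinc (1 * t))) (Set.Icc 0 1) := by
  intro x hx y hy hxy
  rw [base_eq 1 1 one_pos one_pos, base_eq 1 1 one_pos one_pos]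
  have := HH_pos
  refine mul_lt_mul_of_pos_left ?_ (by positivity)
  obtain ⟨h1, h2⟩ := hx
  obtain ⟨h3, h4⟩ := hy
  grind

lemma base_mono (a b : ℝ) (ha : 0 < a) (ha1 : a ≤ 1) (hb : 0 < b) :
    ∫ t in Set.Ioi (0:ℝ), Real.sinc (1 * t) * Real.sinc (b * t) ≤
      ∫ t in Set.Ioi (0:ℝ), Real.sinc (a * t) * Real.sinc (b * t) := by
  have e : ∀ c, 0 < c → ∫ t in Set.Ioi (0:ℝ), Real.sinc (c * t) * Real.sinc (b * t) = HH / max c b := by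
    intro c hc
    have h := base_eq c b hc hb 0
    simp only [ct, zero_mul, Real.cos_zero, one_mul, add_zero, sub_zero] at h
    rw [h, abs_of_pos (by positivity)]
    rcases le_total c b with hcb | hcb
    · rw [max_eq_right hcb, abs_of_nonpos (by linarith)]; field_simp; ring
    · rw [max_eq_left hcb, abs_of_nonneg (by linarith)]; field_simp; ring
  rw [e 1 one_pos, e a ha]
  exact div_le_div_of_nonneg_left HH_pos.le (lt_of_lt_of_le ha (le_max_left _ _)) (max_le_max_right _ ha1)

lemma prod_good {ι : Type*} [DecidableEq ι] (a : ι → ℝ) (ha : ∀ i, 0 < a i) (S : Finset ι) :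
    2 ≤ S.card → Good (fun t => ∏ i ∈ S, Real.sinc (a i * t)) := by
  induction S using Finset.induction_on with
  | empty => simp
  | insert j S hj ih =>
    intro hcard
    rw [Finset.card_insert_of_notMem hj] at hcard
    simp only [Finset.prod_insert hj]
    rcases Nat.lt_or_ge S.card 2 with h | h
    · obtain ⟨k, rfl⟩ := Finset.card_eq_one.1 (by omega : S.card = 1)
      simpa using base_good (a j) (a k) (ha j) (ha k)
    · exact (ih h).step _ (ha j)

lemma pow_good (k : ℕ) (hk : 2 ≤ k) : Good (fun t => Real.sinc t ^ k) ∧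
    StrictAntiOn (ct (fun t => Real.sinc t ^ k)) (Set.Icc 0 1) := by
  induction k, hk using Nat.le_induction with
  | base =>
    have h1 := base_good 1 1 one_pos one_pos
    have h2 := base_strict
    simp only [one_mul, ← sq] at h1 h2
    exact ⟨h1, h2⟩
  | succ k hk ih =>
    have h1 := ih.1.step 1 one_pos
    have h2 := ih.1.step_strict ih.2
    simp only [one_mul, ← pow_succ'] at h1 h2
    exact ⟨h1, h2⟩

noncomputable def FF {n : ℕ} (a : Fin n → ℝ) : ℝ := ∫ t in Set.Ioi (0:ℝ), ∏ i, Real.sinc (a i * t)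

lemma FF_update {n : ℕ} (hn : 2 ≤ n) (a : Fin n → ℝ) (ha : ∀ i, 0 < a i) (j : Fin n) (ha1 : a j ≤ 1) :
    FF (Function.update a j 1) ≤ FF a := by
  unfold FF
  have e1 : ∀ t, ∏ i, Real.sinc (a i * t) =
      Real.sinc (a j * t) * ∏ i ∈ Finset.univ.erase j, Real.sinc (a i * t) := fun t =>
    (Finset.mul_prod_erase _ _ (Finset.mem_univ j)).symm
  have e2 : ∀ t, ∏ i, Real.sinc (Function.update a j 1 i * t) =
      Real.sinc (1 * t) * ∏ i ∈ Finset.univ.erase j, Real.sinc (a i * t) := fun t => by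
    rw [← Finset.mul_prod_erase _ _ (Finset.mem_univ j), Function.update_self]
    congr 1
    refine Finset.prod_congr rfl fun i hi => ?_
    rw [Function.update_of_ne (Finset.ne_of_mem_erase hi)]
  simp only [e1, e2]
  have hcard : (Finset.univ.erase j : Finset (Fin n)).card = n - 1 := by
    rw [Finset.card_erase_of_mem (Finset.mem_univ j)]; simp
  rcases Nat.lt_or_ge (n - 1) 2 with h | h
  · obtain ⟨k, hk⟩ := Finset.card_eq_one.1 (by omega : (Finset.univ.erase j : Finset (Fin n)).card = 1)
    simp only [hk, Finset.prod_singleton]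
    exact base_mono (a j) (a k) (ha j) ha1 (ha k)
  · exact (prod_good a ha _ (by omega)).mono _ (ha j) ha1

lemma FF_piece {n : ℕ} (hn : 2 ≤ n) (a : Fin n → ℝ) (ha : ∀ i, 0 < a i) (ha1 : ∀ i, a i ≤ 1)
    (T : Finset (Fin n)) : FF (fun i => if i ∈ T then 1 else a i) ≤ FF a := by
  induction T using Finset.induction_on with
  | empty => simp
  | insert j T hj ih =>
    refine le_trans ?_ ih
    have := FF_update hn (fun i => if i ∈ T then 1 else a i) (fun i => by
      split_ifs <;> simp [ha]) j (by simp [hj, ha1])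
    convert! this using 2
    ext i
    by_cases hi : i = j
    · subst hi; simp
    · simp [hi]

lemma FF_one (n : ℕ) : FF (fun _ : Fin n => (1:ℝ)) = ∫ t in Set.Ioi (0:ℝ), Real.sinc t ^ n := by
  simp [FF]

lemma FF_ge {n : ℕ} (hn : 2 ≤ n) (a : Fin n → ℝ) (ha : ∀ i, 0 < a i) (ha1 : ∀ i, a i ≤ 1) :
    ∫ t in Set.Ioi (0:ℝ), Real.sinc t ^ n ≤ FF a := by
  rw [← FF_one]
  simpa using FF_piece hn a ha ha1 Finset.univ

lemma FF_gt {n : ℕ} (hn : 3 ≤ n) (a : Fin n → ℝ) (ha : ∀ i, 0 < a i) (ha1 : ∀ i, a i ≤ 1)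
    (j : Fin n) (hj : a j < 1) : ∫ t in Set.Ioi (0:ℝ), Real.sinc t ^ n < FF a := by
  refine lt_of_lt_of_le ?_ (FF_piece (by omega) a ha ha1 (Finset.univ.erase j))
  have e : FF (fun i => if i ∈ Finset.univ.erase j then 1 else a i) =
      ∫ t in Set.Ioi (0:ℝ), Real.sinc (a j * t) * Real.sinc t ^ (n - 1) := by
    unfold FF
    congr 1
    ext t
    rw [← Finset.mul_prod_erase _ _ (Finset.mem_univ j)]
    simp only [Finset.mem_erase, ne_eq, not_true_eq_false, false_and, if_false, Finset.mem_univ, and_true]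
    congr 1
    rw [Finset.prod_congr rfl (g := fun _ => Real.sinc t) (fun i hi => by
      simp [Finset.ne_of_mem_erase hi])]
    rw [Finset.prod_const, Finset.card_erase_of_mem (Finset.mem_univ j)]
    simp
  rw [e]
  obtain ⟨h1, h2⟩ := pow_good (n - 1) (by omega)
  have := h1.mono_strict h2 (a j) (ha j) hj
  simp only [one_mul, ← pow_succ', show n - 1 + 1 = n by omega] at this
  exact this


theorem sinc_product_inequality (n : ℕ) (hn : 2 ≤ n) (s : EuclideanSpace ℝ (Fin n))
    (hs : ‖s‖ = 1) (h0 : ∀ i, s i ≠ 0) :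
    maxNorm s * (∫ t in Set.Ioi (0:ℝ), ∏ i, Real.sin (s i * t) / (s i * t)) ≥
      (∫ t in Set.Ioi (0:ℝ), (Real.sin t / t) ^ n) ∧
    (maxNorm s * (∫ t in Set.Ioi (0:ℝ), ∏ i, Real.sin (s i * t) / (s i * t)) =
        (∫ t in Set.Ioi (0:ℝ), (Real.sin t / t) ^ n) →
      n = 2 ∨ ∀ i, |s i| = maxNorm s) := by
  have hle : ∀ i, |s i| ≤ maxNorm s := fun i =>
    norm_le_pi_norm ((WithLp.equiv 2 (Fin n → ℝ)) s) i
  have hM : 0 < maxNorm s := lt_of_lt_of_le (abs_pos.2 (h0 ⟨0, by omega⟩)) (hle _)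
  set M := maxNorm s with hMdef
  have hR : ∫ t in Set.Ioi (0:ℝ), (Real.sin t / t) ^ n = ∫ t in Set.Ioi (0:ℝ), Real.sinc t ^ n := by
    refine setIntegral_congr_fun measurableSet_Ioi fun t ht => ?_
    rw [Real.sinc_of_ne_zero (ne_of_gt ht)]
  have hL : M * ∫ t in Set.Ioi (0:ℝ), ∏ i, Real.sin (s i * t) / (s i * t) = FF (fun i => |s i| / M) := by
    have h1 : ∫ t in Set.Ioi (0:ℝ), ∏ i, Real.sin (s i * t) / (s i * t) =
        ∫ t in Set.Ioi (0:ℝ), (fun u => ∏ i, Real.sinc (|s i| / M * u)) (M * t) := by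
      refine setIntegral_congr_fun measurableSet_Ioi fun t ht => ?_
      refine Finset.prod_congr rfl fun i _ => ?_
      rw [← Real.sinc_of_ne_zero (mul_ne_zero (h0 i) (ne_of_gt ht)), ← mul_assoc,
        div_mul_cancel₀ _ hM.ne']
      rcases abs_choice (s i) with h | h <;> rw [h]
      rw [← Real.sinc_neg]; congr 1; ring
    rw [h1, integral_comp_mul_left_Ioi
      (fun u => ∏ i, Real.sinc (|s i| / M * u)) 0 hM, mul_zero, smul_eq_mul, ← mul_assoc,
      mul_inv_cancel₀ hM.ne', one_mul]
    rfl
  have ha : ∀ i, 0 < |s i| / M := fun i => div_pos (abs_pos.2 (h0 i)) hM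
  have ha1 : ∀ i, |s i| / M ≤ 1 := fun i => (div_le_one hM).2 (hle i)
  rw [hL, hR]
  refine ⟨FF_ge hn _ ha ha1, fun heq => ?_⟩
  by_contra hcon
  push Not at hcon
  obtain ⟨h2, j, hj⟩ := hcon
  have := FF_gt (by omega) _ ha ha1 j ((div_lt_one hM).2 (lt_of_le_of_ne (hle j) hj))
  linarith
end

section
/- For any nonzero a ∈ ℤⁿ with n ≥ 5, there exist n−1 linearly independent vectors x₁, …, x_{n−1} ∈ ℤⁿ with a·x_i = 0 for all i and ‖x₁‖_∞ ⋯ ‖x_{n−1}‖_∞ < ‖a‖_∞ / σ_n. -/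
open MeasureTheory

/-- uniform probability measure on `(-1,1]` -/
noncomputable def nuU : Measure ℝ := (2:ENNReal)⁻¹ • volume.restrict (Set.Ioc (-1) 1)

instance nuU_prob : IsProbabilityMeasure nuU := by
  constructor
  simp only [nuU, Measure.smul_apply, Measure.restrict_apply MeasurableSet.univ, Set.univ_inter,
    Real.volume_Ioc, smul_eq_mul]
  norm_num
  rw [ENNReal.inv_mul_cancel] <;> norm_num

lemma nuU_integral {F : Type*} [NormedAddCommGroup F] [NormedSpace ℝ F] (f : ℝ → F) :
    ∫ u, f u ∂nuU = (1/2 : ℝ) • ∫ u in (-1:ℝ)..1, f u := by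
  rw [nuU, integral_smul_measure, intervalIntegral.integral_of_le (by norm_num)]
  norm_num

/-- symmetric decreasing nonnegative functions -/
def SD (h : ℝ → ℝ) : Prop := (∀ x, 0 ≤ h x) ∧ ∀ x y, |x| ≤ |y| → h y ≤ h x

lemma SD.neg {h : ℝ → ℝ} (H : SD h) (x : ℝ) : h (-x) = h x :=
  le_antisymm (H.2 _ _ (by simp)) (H.2 _ _ (by simp))

lemma SD.measurable {h : ℝ → ℝ} (H : SD h) : Measurable h := by
  have h1 : Antitone (fun x : ℝ => h (max x 0)) := by
    intro x y hxy
    apply H.2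
    rw [abs_of_nonneg (le_max_right _ _), abs_of_nonneg (le_max_right _ _)]
    exact max_le_max hxy le_rfl
  have h2 : h = (fun x : ℝ => h (max x 0)) ∘ fun x => |x| := by
    ext x
    simp only [Function.comp]
    apply le_antisymm <;> apply H.2 <;> simp
  rw [h2]
  exact h1.measurable.comp measurable_id.abs

lemma SD.le {h : ℝ → ℝ} (H : SD h) (x : ℝ) : h x ≤ h 0 := H.2 _ _ (by simp)

lemma SD.norm_le {h : ℝ → ℝ} (H : SD h) (x : ℝ) : ‖h x‖ ≤ h 0 := by
  rw [Real.norm_of_nonneg (H.1 x)]; exact H.le x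

lemma SD.integrable_comp {h : ℝ → ℝ} (H : SD h) {α : Type*} [MeasurableSpace α] {μ : Measure α}
    [IsFiniteMeasure μ] {f : α → ℝ} (hf : Measurable f) : Integrable (fun u => h (f u)) μ :=
  Integrable.of_bound (H.measurable.comp hf).aestronglyMeasurable (h 0)
    (Filter.Eventually.of_forall fun _ => H.norm_le _)

lemma SD.intervalIntegrable_comp {h : ℝ → ℝ} (H : SD h) {f : ℝ → ℝ} (hf : Measurable f) (a b : ℝ) :
    IntervalIntegrable (fun u => h (f u)) volume a b :=
  ⟨H.integrable_comp hf, H.integrable_comp hf⟩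

noncomputable def TT (c : ℝ) (h : ℝ → ℝ) (x : ℝ) : ℝ := ∫ u, h (x + c * u) ∂nuU

lemma TT_eq (c : ℝ) (h : ℝ → ℝ) (x : ℝ) :
    TT c h x = (1/2) * ∫ u in (-1:ℝ)..1, h (x + c * u) := by
  rw [TT, nuU_integral, smul_eq_mul]

lemma TT_neg_left (c : ℝ) (h : ℝ → ℝ) (x : ℝ) : TT (-c) h x = TT c h x := by
  rw [TT_eq, TT_eq]
  congr 1
  have := intervalIntegral.integral_comp_neg (a := -1) (b := 1) (fun u => h (x + c * u))
  simp only [neg_neg] at this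
  rw [← this]
  congr 1; ext u; congr 1; ring

lemma TT_abs (c : ℝ) (h : ℝ → ℝ) (x : ℝ) : TT |c| h x = TT c h x := by
  rcases abs_choice c with hc | hc <;> rw [hc]
  exact TT_neg_left _ _ _

lemma TT_neg {h : ℝ → ℝ} (H : SD h) (c x : ℝ) : TT c h (-x) = TT c h x := by
  rw [← TT_neg_left, TT, TT]
  congr 1; ext u
  rw [← H.neg]; congr 1; ring

lemma TT_eq_pos {c : ℝ} (hc : 0 < c) (h : ℝ → ℝ) (x : ℝ) :
    TT c h x = (1/2) * (c⁻¹ * ∫ s in (x - c)..(x + c), h s) := by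
  rw [TT_eq, intervalIntegral.integral_comp_add_mul _ hc.ne']
  simp [sub_eq_add_neg]

lemma TT_diff {h : ℝ → ℝ} (H : SD h) {c : ℝ} (hc : 0 < c) (x y : ℝ) :
    TT c h x - TT c h y = (1/2) * (c⁻¹ * ∫ s in x..y, (h (s - c) - h (s + c))) := by
  rw [TT_eq_pos hc, TT_eq_pos hc, ← mul_sub, ← mul_sub]
  congr 2
  have I : ∀ a b, IntervalIntegrable h volume a b := fun a b =>
    H.intervalIntegrable_comp measurable_id a b
  rw [intervalIntegral.integral_sub (H.intervalIntegrable_comp (by fun_prop) _ _)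
    (H.intervalIntegrable_comp (by fun_prop) _ _), intervalIntegral.integral_comp_sub_right,
    intervalIntegral.integral_comp_add_right]
  have e1 := intervalIntegral.integral_add_adjacent_intervals (I (x-c) (y-c)) (I (y-c) (y+c))
  have e2 := intervalIntegral.integral_add_adjacent_intervals (I (x-c) (x+c)) (I (x+c) (y+c))
  linarith

lemma SD.TT {h : ℝ → ℝ} (H : SD h) (c : ℝ) : SD (TT c h) := by
  refine ⟨fun x => integral_nonneg fun u => H.1 _, ?_⟩
  have key : ∀ x y, 0 ≤ x → x ≤ y → _root_.TT c h y ≤ _root_.TT c h x := by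
    intro x y hx hxy
    rw [← TT_abs c, ← TT_abs c]
    rcases (abs_nonneg c).eq_or_lt with h0 | h0
    · rw [← h0]
      simp only [_root_.TT, zero_mul, add_zero, integral_const, probReal_univ, one_smul]
      exact H.2 _ _ (by rw [abs_of_nonneg hx, abs_of_nonneg (hx.trans hxy)]; exact hxy)
    · have := TT_diff H h0 x y
      have h2 : 0 ≤ ∫ s in x..y, (h (s - |c|) - h (s + |c|)) := by
        apply intervalIntegral.integral_nonneg hxy
        intro s hs
        have : h (s + |c|) ≤ h (s - |c|) := by
          apply H.2
          rw [abs_of_nonneg (by linarith [hs.1] : 0 ≤ s + |c|)]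
          rw [abs_le]; constructor <;> linarith [hs.1]
        linarith
      have h3 : 0 ≤ (1/2) * (|c|⁻¹ * ∫ s in x..y, (h (s - |c|) - h (s + |c|))) := by positivity
      linarith
  have habs : ∀ x, _root_.TT c h |x| = _root_.TT c h x := by
    intro x
    rcases abs_choice x with hc | hc <;> rw [hc]
    exact TT_neg H _ _
  intro x y hxy
  rw [← habs x, ← habs y]
  exact key _ _ (abs_nonneg _) hxy

lemma TT_zero_mono {h : ℝ → ℝ} (H : SD h) {c d : ℝ} (hcd : |c| ≤ |d|) : TT d h 0 ≤ TT c h 0 := by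
  apply integral_mono (H.integrable_comp (by fun_prop)) (H.integrable_comp (by fun_prop))
  intro u
  apply H.2
  simp only [zero_add, abs_mul]
  gcongr

noncomputable def EE (n : ℕ) (a : Fin n → ℝ) (h : ℝ → ℝ) (x : ℝ) : ℝ :=
  ∫ u, h (x + ∑ i, a i * u i) ∂Measure.pi (fun _ : Fin n => nuU)

lemma EE_succ {n : ℕ} (a : Fin (n+1) → ℝ) {h : ℝ → ℝ} (H : SD h) (i : Fin (n+1)) (x : ℝ) :
    EE (n+1) a h x = TT (a i) (EE n (fun j => a (i.succAbove j)) h) x := by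
  have mp := measurePreserving_piFinSuccAbove (fun _ : Fin (n+1) => nuU) i
  rw [EE, ← mp.symm.integral_comp (MeasurableEquiv.measurableEmbedding _)]
  rw [integral_prod]
  · rw [TT]
    congr 1; ext u
    rw [EE]
    congr 1; ext v
    congr 1
    rw [Fin.sum_univ_succAbove _ i]
    have e : (MeasurableEquiv.piFinSuccAbove (fun _ : Fin (n+1) => ℝ) i).symm (u, v)
      = Fin.insertNth (α := fun _ => ℝ) i u v := rfl
    rw [e]
    simp [add_assoc]
  · apply H.integrable_comp
    fun_prop

lemma EE_SD {n : ℕ} (a : Fin n → ℝ) {h : ℝ → ℝ} (H : SD h) : SD (EE n a h) := by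
  induction n with
  | zero =>
    have : EE 0 a h = h := by
      ext x; simp [EE]
    rw [this]; exact H
  | succ n ih =>
    have : EE (n+1) a h = TT (a 0) (EE n (fun j => a (Fin.succAbove 0 j)) h) := by
      ext x; exact EE_succ a H 0 x
    rw [this]
    exact (ih _).TT _

lemma EE_update {n : ℕ} (a : Fin n → ℝ) {h : ℝ → ℝ} (H : SD h) (i : Fin n) {c : ℝ}
    (hc : |a i| ≤ |c|) : EE n (Function.update a i c) h 0 ≤ EE n a h 0 := by
  cases n with
  | zero => exact i.elim0
  | succ n =>
    rw [EE_succ a H i, EE_succ _ H i]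
    have : (fun j => Function.update a i c (i.succAbove j)) = fun j => a (i.succAbove j) := by
      ext j; rw [Function.update_of_ne (Fin.succAbove_ne i j)]
    rw [this, Function.update_self]
    exact TT_zero_mono (EE_SD _ H) hc

open Classical in
lemma EE_piecewise {n : ℕ} (a b : Fin n → ℝ) {h : ℝ → ℝ} (H : SD h) (hab : ∀ i, |a i| ≤ |b i|)
    (S : Finset (Fin n)) : EE n (S.piecewise b a) h 0 ≤ EE n a h 0 := by
  induction S using Finset.induction_on with
  | empty => simp
  | insert i S hi ih =>
    rw [Finset.piecewise_insert]
    refine le_trans (EE_update _ H i ?_) ih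
    rw [Finset.piecewise_eq_of_notMem _ _ _ hi]
    exact hab i

lemma EE_mono {n : ℕ} (a b : Fin n → ℝ) {h : ℝ → ℝ} (H : SD h) (hab : ∀ i, |a i| ≤ |b i|) :
    EE n b h 0 ≤ EE n a h 0 := by
  simpa using EE_piecewise a b H hab Finset.univ


/-- `DD m` is twice the density of a sum of `m+1` independent uniform variables on `(-1,1]`. -/
noncomputable def DD : ℕ → ℝ → ℝ
  | 0 => fun x => if |x| < 1 then 1 else 0
  | (m+1) => TT 1 (DD m)

lemma DD_SD (m : ℕ) : SD (DD m) := by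
  induction m with
  | zero =>
    refine ⟨fun x => ?_, fun x y hxy => ?_⟩
    · simp only [DD]; split_ifs <;> norm_num
    · simp only [DD]
      by_cases hx : |x| < 1
      · rw [if_pos hx]; split_ifs <;> norm_num
      · rw [if_neg hx, if_neg (by linarith)]
  | succ m ih => exact ih.TT 1

lemma DD_zero_eq (x : ℝ) : DD 0 x = (Set.Ioo (-1:ℝ) 1).indicator (fun _ => (1:ℝ)) x := by
  simp only [DD, Set.indicator_apply, Set.mem_Ioo, abs_lt]

/-- general Fubini integrability -/
lemma shear_integrable {D : ℝ → ℝ} (hD : SD D) (hi : Integrable D) {𝕜 : Type*} [RCLike 𝕜]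
    {g : ℝ → 𝕜} (hg : Measurable g) {C : ℝ} (hC : ∀ x, ‖g x‖ ≤ C) :
    Integrable (fun p : ℝ × ℝ => g p.2 * ((D (p.2 + 1 * p.1) : ℝ) : 𝕜)) (nuU.prod volume) := by
  have hm := hD.measurable
  have h1 : Integrable (fun p : ℝ × ℝ => ((D (p.2 + 1 * p.1) : ℝ) : 𝕜)) (nuU.prod volume) := by
    have hms : AEStronglyMeasurable (fun p : ℝ × ℝ => ((D (p.2 + 1 * p.1) : ℝ) : 𝕜))
        (nuU.prod volume) :=
      (RCLike.measurable_ofReal.comp (hm.comp (by fun_prop))).aestronglyMeasurable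
    rw [integrable_prod_iff hms]
    constructor
    · refine Filter.Eventually.of_forall fun u => ?_
      exact (hi.comp_add_right (1 * u)).ofReal
    · have : ∀ u : ℝ, ∫ y, ‖((D (y + 1 * u) : ℝ) : 𝕜)‖ = ∫ y, ‖D y‖ := by
        intro u
        simp only [RCLike.norm_ofReal, Real.norm_eq_abs]
        exact integral_add_right_eq_self (fun y => |D y|) (1 * u)
      simp only [this]
      exact integrable_const _
  exact h1.bdd_mul (hg.comp measurable_snd).aestronglyMeasurable (Filter.Eventually.of_forall fun p => hC p.2)

lemma TT_integrable {D : ℝ → ℝ} (hD : SD D) (hi : Integrable D) : Integrable (TT 1 D) := by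
  have := (shear_integrable hD hi (𝕜 := ℝ) (g := fun _ => 1) (by fun_prop) (C := 1)
    (by simp)).integral_prod_right
  have e : TT 1 D = fun y => ∫ x, D (y + x) ∂nuU := by
    ext y; simp [TT]
  rw [e]
  simpa using this

lemma TT_adj {D : ℝ → ℝ} (hD : SD D) (hi : Integrable D) {𝕜 : Type*} [RCLike 𝕜]
    {g : ℝ → 𝕜} (hg : Measurable g) {C : ℝ} (hC : ∀ x, ‖g x‖ ≤ C) :
    ∫ s, g s * ((TT 1 D s : ℝ) : 𝕜) = ∫ u, (∫ s, g (s - u) * ((D s : ℝ) : 𝕜)) ∂nuU := by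
  have h1 := integral_integral_swap
    (f := fun u s => g s * ((D (s + 1 * u) : ℝ) : 𝕜)) (shear_integrable hD hi hg hC)
  have h2 : ∀ s, g s * ((TT 1 D s : ℝ) : 𝕜) = ∫ u, g s * ((D (s + 1 * u) : ℝ) : 𝕜) ∂nuU := by
    intro s
    rw [integral_const_mul, TT, integral_ofReal]
  simp_rw [h2]
  rw [← h1]
  congr 1; ext u
  rw [← integral_add_right_eq_self (fun s => g (s - u) * ((D s : ℝ) : 𝕜)) (1 * u)]
  simp

lemma DD_integrable (m : ℕ) : Integrable (DD m) := by
  induction m with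
  | zero =>
    have : DD 0 = (Set.Ioo (-1:ℝ) 1).indicator (fun _ => (1:ℝ)) := funext DD_zero_eq
    rw [this, integrable_indicator_iff measurableSet_Ioo]
    simp
  | succ m ih => exact TT_integrable (DD_SD m) ih

lemma DD_zero_integral {𝕜 : Type*} [RCLike 𝕜] (g : ℝ → 𝕜) :
    ∫ s, g s * ((DD 0 s : ℝ) : 𝕜) = 2 * ∫ u, g u ∂nuU := by
  have : ∀ s, g s * ((DD 0 s : ℝ) : 𝕜) = (Set.Ioo (-1:ℝ) 1).indicator g s := by
    intro s
    rw [DD_zero_eq]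
    by_cases hs : s ∈ Set.Ioo (-1:ℝ) 1 <;> simp [hs]
  simp_rw [this]
  rw [integral_indicator measurableSet_Ioo, nuU_integral,
    intervalIntegral.integral_of_le (by norm_num), integral_Ioc_eq_integral_Ioo,
    RCLike.real_smul_eq_coe_mul]
  push_cast
  ring

lemma EE_one_eq (m : ℕ) {h : ℝ → ℝ} (H : SD h) (x : ℝ) :
    EE (m+1) (fun _ => 1) h x = (1/2) * ∫ s, h (x - s) * DD m s := by
  induction m generalizing x with
  | zero =>
    rw [EE_succ _ H 0]
    have := DD_zero_integral (fun s => h (x - s))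
    simp only [RCLike.ofReal_real_eq_id, id] at this
    rw [this, ← TT_neg_left]
    simp [TT, EE, sub_eq_add_neg]
  | succ m ih =>
    rw [EE_succ _ H 0]
    have := TT_adj (DD_SD m) (DD_integrable m) (g := fun s => h (x - s))
      (H.measurable.comp (by fun_prop)) (C := h 0) (fun s => H.norm_le _)
    simp only [RCLike.ofReal_real_eq_id, id] at this
    simp only [DD]
    rw [this, TT, ← integral_const_mul]
    congr 1; ext u
    rw [ih]
    congr 2; ext s
    congr 2; ring

lemma DD_le_one (m : ℕ) (x : ℝ) : DD m x ≤ 1 := by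
  refine ((DD_SD m).le x).trans ?_
  induction m with
  | zero => simp [DD]
  | succ m ih =>
    have := TT_zero_mono (DD_SD m) (c := 0) (d := 1) (by simp)
    simp only [DD]
    refine this.trans ?_
    simpa [TT] using ih

lemma TT_continuous_of {D : ℝ → ℝ} (hD : SD D) (c : ℝ) (hc : 0 < c) : Continuous (TT c D) := by
  have I : ∀ a b, IntervalIntegrable D volume a b := fun a b =>
    hD.intervalIntegrable_comp measurable_id a b
  have h := intervalIntegral.continuous_primitive I 0
  have : TT c D = fun x => (1/2) * (c⁻¹ * ((∫ s in (0:ℝ)..(x+c), D s) - ∫ s in (0:ℝ)..(x-c), D s)) := by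
    ext x
    rw [TT_eq_pos hc, intervalIntegral.integral_interval_sub_left (I _ _) (I _ _)]
  rw [this]
  have h1 := h.comp (continuous_id.add (continuous_const (y := c)))
  have h2 := h.comp (continuous_id.sub (continuous_const (y := c)))
  simp only [Function.comp_def] at h1 h2
  fun_prop

lemma DD_continuous (m : ℕ) : Continuous (DD (m+1)) := TT_continuous_of (DD_SD m) 1 one_pos

lemma TT_DD_continuous (κ : ℝ) (m : ℕ) : Continuous (TT κ (DD (m+1))) := by
  have : TT κ (DD (m+1)) = TT |κ| (DD (m+1)) := by ext x; rw [TT_abs]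
  rw [this]
  rcases (abs_nonneg κ).eq_or_lt with h0 | h0
  · rw [← h0]
    have e : TT 0 (DD (m+1)) = DD (m+1) := by
      ext y; simp [TT]
    rw [e]; exact DD_continuous m
  · exact TT_continuous_of (DD_SD _) _ h0

lemma DD_one_lt (m : ℕ) : DD (m+1) 1 < DD (m+1) 0 := by
  induction m with
  | zero =>
    have h := TT_diff (DD_SD 0) one_pos 0 1
    have : ∫ s in (0:ℝ)..1, (DD 0 (s - 1) - DD 0 (s + 1)) = ∫ s in (0:ℝ)..1, (1:ℝ) := by
      apply intervalIntegral.integral_congr_ae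
      refine Filter.Eventually.of_forall fun s hs => ?_
      rw [Set.uIoc_of_le zero_le_one] at hs
      simp only [DD]
      rw [if_pos (by rw [abs_lt]; constructor <;> linarith [hs.1, hs.2]),
        if_neg (by rw [not_lt, le_abs]; left; linarith [hs.1])]
      norm_num
    rw [this] at h
    simp only [DD]
    norm_num at h
    simp only [DD] at h
    linarith
  | succ m ih =>
    have h := TT_diff (DD_SD (m+1)) one_pos 0 1
    have hc := DD_continuous m
    have h2 : 0 < ∫ s in (0:ℝ)..1, (DD (m+1) (s - 1) - DD (m+1) (s + 1)) := by
      apply intervalIntegral.integral_pos zero_lt_one (by fun_prop)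
      · intro s hs
        have := (DD_SD (m+1)).2 (s-1) (s+1) (by
          rw [abs_of_nonneg (by linarith [hs.1] : 0 ≤ s + 1), abs_le]
          constructor <;> linarith [hs.1])
        linarith
      · refine ⟨1, by simp, ?_⟩
        have := (DD_SD (m+1)).2 1 (1+1) (by norm_num)
        simp only [sub_self]
        linarith
    have h3 : TT 1 (DD (m+1)) 1 < TT 1 (DD (m+1)) 0 := by
      have : 0 < (1/2) * ((1:ℝ)⁻¹ * ∫ s in (0:ℝ)..1, (DD (m+1) (s - 1) - DD (m+1) (s + 1))) := by
        positivity
      linarith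
    exact h3

lemma TT_DD_strict {κ : ℝ} (h1 : |κ| < 1) (m : ℕ) : DD (m+2) 0 < TT κ (DD (m+1)) 0 := by
  have hc := DD_continuous m
  have H := DD_SD (m+1)
  have hle : ∀ u : ℝ, DD (m+1) u ≤ DD (m+1) (κ * u) := by
    intro u
    apply H.2
    rw [abs_mul]
    exact mul_le_of_le_one_left (abs_nonneg _) h1.le
  by_contra hcon
  have hall : ∀ u ∈ Set.Icc (-1:ℝ) 1, ¬ DD (m+1) u < DD (m+1) (κ * u) := by
    intro u hu hlt
    apply hcon
    have : 0 < ∫ s in (-1:ℝ)..1, (DD (m+1) (κ * s) - DD (m+1) s) := by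
      apply intervalIntegral.integral_pos (by norm_num) (by fun_prop)
      · intro s hs
        linarith [hle s]
      · exact ⟨u, hu, by linarith⟩
    rw [intervalIntegral.integral_sub (H.intervalIntegrable_comp (by fun_prop) _ _)
      (H.intervalIntegrable_comp (by fun_prop) _ _)] at this
    change TT 1 (DD (m+1)) 0 < _
    rw [TT_eq, TT_eq]
    simp only [zero_add, one_mul]
    linarith
  have hpow : ∀ k : ℕ, DD (m+1) (κ ^ k) = DD (m+1) 1 := by
    intro k
    induction k with
    | zero => simp
    | succ k ih =>
      have hk : κ ^ k ∈ Set.Icc (-1:ℝ) 1 := by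
        rw [Set.mem_Icc, ← abs_le, abs_pow]
        exact pow_le_one₀ (abs_nonneg _) h1.le
      have := hall _ hk
      rw [← ih, pow_succ']
      exact le_antisymm (not_lt.mp this) (hle _)
  have lim : Filter.Tendsto (fun k : ℕ => DD (m+1) (κ ^ k)) Filter.atTop (nhds (DD (m+1) 0)) :=
    (hc.tendsto 0).comp (tendsto_pow_atTop_nhds_zero_of_abs_lt_one h1)
  simp only [hpow] at lim
  have := tendsto_nhds_unique lim tendsto_const_nhds
  linarith [DD_one_lt m]


lemma nuU_exp (w : ℝ) : ∫ u, Complex.exp (((w * u : ℝ) : ℂ) * Complex.I) ∂nuU = Real.sinc w := by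
  rw [nuU_integral]
  by_cases hw : w = 0
  · simp [hw]; norm_num
  have h1 := intervalIntegral.integral_comp_mul_left (a := -1) (b := 1)
    (fun t : ℝ => Complex.exp ((t : ℂ) * Complex.I)) hw
  rw [h1]
  simp only [mul_neg, mul_one]
  rw [integral_exp_mul_I_eq_sinc, Complex.real_smul, Complex.real_smul]
  have : (w : ℂ) ≠ 0 := by exact_mod_cast hw
  push_cast
  field_simp

lemma DD_exp_integral (m : ℕ) (w : ℝ) :
    ∫ s, Complex.exp (((w * s : ℝ) : ℂ) * Complex.I) * ((DD m s : ℝ) : ℂ)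
      = 2 * (Real.sinc w : ℂ) ^ (m+1) := by
  have hsym : ∫ u, Complex.exp (((w * (-u) : ℝ) : ℂ) * Complex.I) ∂nuU = Real.sinc w := by
    have := nuU_exp (-w)
    rw [Real.sinc_neg] at this
    rw [← this]
    congr 1; ext u; congr 3; ring
  induction m with
  | zero =>
    have := DD_zero_integral (𝕜 := ℂ) (fun s => Complex.exp (((w * s : ℝ) : ℂ) * Complex.I))
    refine this.trans ?_
    rw [nuU_exp]; simp
  | succ m ih =>
    have := TT_adj (DD_SD m) (DD_integrable m) (𝕜 := ℂ)
      (g := fun s => Complex.exp (((w * s : ℝ) : ℂ) * Complex.I))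
      (by fun_prop) (C := 1) (fun s => (Complex.norm_exp_ofReal_mul_I _).le)
    refine this.trans ?_
    have h2 : ∀ u : ℝ, (∫ s, Complex.exp (((w * (s - u) : ℝ) : ℂ) * Complex.I) * ((DD m s : ℝ) : ℂ))
        = Complex.exp (((w * (-u) : ℝ) : ℂ) * Complex.I) * (2 * (Real.sinc w : ℂ) ^ (m+1)) := by
      intro u
      rw [← ih, ← integral_const_mul]
      congr 1; ext s
      rw [← mul_assoc, ← Complex.exp_add]
      congr 2
      push_cast; ring
    refine (integral_congr_ae (Filter.Eventually.of_forall h2)).trans ?_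
    rw [integral_mul_const, hsym]
    ring

lemma sinc_pow_integrable (m : ℕ) : Integrable (fun t => Real.sinc t ^ (m+2)) := by
  refine Integrable.mono' (integrable_inv_one_add_sq.const_mul 2)
    (Real.continuous_sinc.pow _).aestronglyMeasurable ?_
  refine Filter.Eventually.of_forall fun t => ?_
  rw [norm_pow, Real.norm_eq_abs]
  have h1 := Real.abs_sinc_le_one t
  have h2 : |Real.sinc t| ^ (m+2) ≤ |Real.sinc t| ^ 2 :=
    pow_le_pow_of_le_one (abs_nonneg _) h1 (by omega)
  refine h2.trans ?_
  rw [← div_eq_mul_inv, le_div_iff₀ (by positivity), sq_abs]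
  have h3 : Real.sinc t ^ 2 ≤ 1 := by
    rw [← sq_abs]; exact pow_le_one₀ (abs_nonneg _) h1
  have h4 : t * Real.sinc t = Real.sin t := by
    by_cases ht : t = 0
    · simp [ht]
    · rw [Real.sinc_of_ne_zero ht]; field_simp
  have h5 : (t * Real.sinc t) ^ 2 ≤ 1 := by rw [h4]; exact Real.sin_sq_le_one t
  nlinarith

open FourierTransform in
lemma sigma_eq (m : ℕ) : sigma (m+2) = DD (m+1) 0 := by
  have hF : 𝓕 (fun x : ℝ => ((DD (m+1) x : ℝ) : ℂ)) =
      fun w => ((2 * Real.sinc ((-2 * Real.pi) * w) ^ (m+2) : ℝ) : ℂ) := by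
    ext w
    rw [Real.fourier_real_eq_integral_exp_smul]
    have := DD_exp_integral (m+1) (-2 * Real.pi * w)
    push_cast
    push_cast at this
    rw [← this]
    congr 1; ext s
    rw [smul_eq_mul]
    congr 2
    ring
  have hInt1 : Integrable (fun w : ℝ => 2 * Real.sinc ((-2 * Real.pi) * w) ^ (m+2)) :=
    (((sinc_pow_integrable m).comp_mul_left' (by simp [Real.pi_ne_zero] : (-2 * Real.pi) ≠ 0))).const_mul 2
  have hinv := congrFun (Continuous.fourierInv_fourier_eq (f := fun x : ℝ => ((DD (m+1) x : ℝ) : ℂ))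
    (by have := DD_continuous m; fun_prop) ((DD_integrable (m+1)).ofReal (𝕜 := ℂ))
    (by rw [hF]; exact hInt1.ofReal)) 0
  rw [hF, Real.fourierInv_eq'] at hinv
  simp only [inner_zero_right, mul_zero, Complex.ofReal_zero, zero_mul, Complex.exp_zero,
    one_smul] at hinv
  rw [integral_complex_ofReal] at hinv
  have hinv2 := Complex.ofReal_injective hinv
  rw [← hinv2, integral_const_mul, Measure.integral_comp_mul_left (fun x => Real.sinc x ^ (m+2))]
  have habs : ∫ x, Real.sinc x ^ (m+2) = 2 * ∫ x in Set.Ioi (0:ℝ), Real.sinc x ^ (m+2) := by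
    rw [← integral_comp_abs (f := fun x => Real.sinc x ^ (m+2))]
    congr 1; ext x
    rcases abs_choice x with hx | hx <;> rw [hx]
    rw [Real.sinc_neg]
  rw [habs, sigma]
  have : ∫ t in Set.Ioi (0:ℝ), (Real.sin t / t) ^ (m+2) = ∫ x in Set.Ioi (0:ℝ), Real.sinc x ^ (m+2) := by
    apply setIntegral_congr_fun measurableSet_Ioi
    intro t ht
    simp only
    rw [Real.sinc_of_ne_zero (ne_of_gt ht)]
  rw [this, abs_inv, smul_eq_mul, abs_mul, abs_of_pos Real.pi_pos]
  have := Real.pi_pos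
  norm_num
  field_simp

lemma sigma_pos (m : ℕ) : 0 < sigma (m+2) := by
  rw [sigma_eq]
  exact ((DD_SD _).1 1).trans_lt (DD_one_lt m)

lemma sigma_lt_one (m : ℕ) : sigma (m+3) < 1 := by
  rw [sigma_eq]
  refine (TT_DD_strict (κ := 0) (by simp) m).trans_le ?_
  simpa [TT] using DD_le_one (m+1) 0


noncomputable def hh (δ : ℝ) : ℝ → ℝ := fun x => if |x| < δ then 1 else 0

lemma hh_SD (δ : ℝ) : SD (hh δ) := by
  refine ⟨fun x => ?_, fun x y hxy => ?_⟩
  · simp only [hh]; split_ifs <;> norm_num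
  · simp only [hh]
    by_cases hx : |x| < δ
    · rw [if_pos hx]; split_ifs <;> norm_num
    · rw [if_neg hx, if_neg (by linarith)]

lemma hh_eq (δ x : ℝ) : hh δ x = (Set.Ioo (-δ) δ).indicator (fun _ => (1:ℝ)) x := by
  simp only [hh, Set.indicator_apply, Set.mem_Ioo, abs_lt]

lemma TT_EE_hh (m : ℕ) (κ δ : ℝ) : TT κ (EE (m+2) (fun _ => 1) (hh δ)) 0 =
    (1/2) * ∫ s in Set.Ioo (-δ) δ, TT κ (DD (m+1)) s := by
  have h1 : ∀ y, EE (m+2) (fun _ => 1) (hh δ) y = (1/2) * ∫ s in Set.Ioo (-δ) δ, DD (m+1) (s - y) := by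
    intro y
    rw [EE_one_eq _ (hh_SD δ), ← integral_indicator measurableSet_Ioo,
      ← integral_sub_left_eq_self _ volume y]
    congr 2; ext s
    rw [hh_eq]
    have : DD (m+1) (y - s) = DD (m+1) (s - y) := by
      rw [← (DD_SD _).neg]; congr 1; ring
    by_cases hs : s ∈ Set.Ioo (-δ) δ <;> simp [hs, this]
  rw [TT]
  simp_rw [h1]
  rw [integral_const_mul]
  congr 1
  rw [integral_integral_swap]
  · congr 1; ext s
    rw [← TT_neg_left, TT]
    congr 1; ext u; congr 1; ring
  · have : Measurable (fun p : ℝ × ℝ => p.2 - (0 + κ * p.1)) := by fun_prop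
    exact (DD_SD (m+1)).integrable_comp this

lemma EE_gt (m : ℕ) (b : Fin (m+3) → ℝ) (hb : ∀ i, |b i| ≤ 1) (j : Fin (m+3)) (hj : |b j| < 1) :
    ∃ δ₀ > 0, ∀ δ, 0 < δ → δ < δ₀ → δ * sigma (m+3) < EE (m+3) b (hh δ) 0 := by
  have hst := TT_DD_strict hj m
  rw [← sigma_eq (m+1)] at hst
  obtain ⟨r, hr1, hr2⟩ := exists_between hst
  have hev := ((TT_DD_continuous (b j) m).tendsto 0).eventually (lt_mem_nhds hr2)
  obtain ⟨δ₀, hδ₀, hball⟩ := Metric.eventually_nhds_iff.mp hev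
  refine ⟨δ₀, hδ₀, fun δ h0 h1 => ?_⟩
  have hmono := EE_mono b (Function.update (fun _ => 1) j (b j)) (hh_SD δ) (fun i => by
    by_cases hi : i = j
    · subst hi; simp
    · rw [Function.update_of_ne hi]; simpa using hb i)
  refine lt_of_lt_of_le ?_ hmono
  rw [EE_succ _ (hh_SD δ) j]
  have e : (fun i => Function.update (fun _ => (1:ℝ)) j (b j) (j.succAbove i)) = fun _ => 1 := by
    ext i; rw [Function.update_of_ne (Fin.succAbove_ne j i)]
  rw [e, Function.update_self, TT_EE_hh]
  have hle : ∫ s in Set.Ioo (-δ) δ, r ≤ ∫ s in Set.Ioo (-δ) δ, TT (b j) (DD (m+1)) s := by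
    apply setIntegral_mono_on
    · exact integrable_const _
    · exact ((DD_SD (m+1)).TT (b j)).integrable_comp measurable_id
    · exact measurableSet_Ioo
    · intro s hs
      apply le_of_lt
      apply hball
      rw [Real.dist_eq, sub_zero, abs_lt]
      constructor <;> linarith [hs.1, hs.2]
  have hconst : ∫ s in Set.Ioo (-δ) δ, r = 2 * δ * r := by
    rw [setIntegral_const, Real.volume_real_Ioo_of_le (by linarith), smul_eq_mul]; ring
  rw [hconst] at hle
  have : δ * sigma (m+3) < δ * r := by gcongr
  linarith

lemma pi_nuU (n : ℕ) : Measure.pi (fun _ : Fin n => nuU) =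
    ((2:ENNReal)⁻¹ ^ n) • volume.restrict (Set.pi Set.univ fun _ : Fin n => Set.Ioo (-1:ℝ) 1) := by
  apply Measure.pi_eq
  intro s hs
  rw [Measure.smul_apply, volume_pi, Measure.restrict_pi_pi, Measure.pi_pi]
  simp only [nuU, Measure.smul_apply, smul_eq_mul]
  rw [Finset.prod_mul_distrib]
  simp [restrict_Ioo_eq_restrict_Ioc]

def KK (n : ℕ) (a : Fin n → ℤ) (N : ℝ) : Set (Fin n → ℝ) :=
  {x | ‖x‖ < N / 2 ∧ |∑ i, (a i : ℝ) * x i| < 1 / 2}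

open scoped Pointwise in
lemma KK_volume_ge (n : ℕ) (hn : 0 < n) (a : Fin n → ℤ) (N M : ℝ) (hN : 0 < N) (hM : 0 < M) :
    ENNReal.ofReal (N ^ n * EE n (fun i => a i / M) (hh (1 / (N * M))) 0) ≤ volume (KK n a N) := by
  set δ := 1 / (N * M) with hδ
  set S : Set (Fin n → ℝ) := {u | |∑ i, (a i / M) * u i| < δ} with hS
  have hSm : MeasurableSet S := by
    apply measurableSet_lt <;> fun_prop
  have hEE : EE n (fun i => a i / M) (hh δ) 0 = (Measure.pi (fun _ : Fin n => nuU)).real S := by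
    rw [EE, ← integral_indicator_one hSm]
    congr 1; ext u
    simp [hh, hS, Set.indicator_apply]
  rw [hEE, ENNReal.ofReal_mul (by positivity), Measure.real, ENNReal.ofReal_toReal (measure_ne_top _ _),
    pi_nuU, Measure.smul_apply, Measure.restrict_apply hSm]
  have hsub : (N / 2) • (S ∩ Set.pi Set.univ fun _ : Fin n => Set.Ioo (-1:ℝ) 1) ⊆ KK n a N := by
    rintro _ ⟨u, ⟨hu1, hu2⟩, rfl⟩
    simp only [hS, Set.mem_ofPred_eq] at hu1
    simp only [Set.mem_pi, Set.mem_univ, true_implies] at hu2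
    constructor
    · have : Nonempty (Fin n) := ⟨⟨0, hn⟩⟩
      rw [norm_smul, Real.norm_of_nonneg (by positivity)]
      have : ‖u‖ < 1 := by
        rw [pi_norm_lt_iff one_pos]
        intro i
        rw [Real.norm_eq_abs, abs_lt]
        exact hu2 i
      nlinarith
    · have e : ∑ i, (a i : ℝ) * ((N / 2) • u) i = (N / 2 * M) * ∑ i, (a i / M) * u i := by
        rw [Finset.mul_sum]
        congr 1; ext i
        simp only [Pi.smul_apply, smul_eq_mul]
        field_simp
      simp only [e, abs_mul, abs_of_pos hM]
      rw [abs_of_pos (by positivity : 0 < N / 2)]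
      calc N / 2 * M * |∑ i, (a i / M) * u i| < N / 2 * M * δ := by gcongr
        _ = 1 / 2 := by rw [hδ]; field_simp
  refine le_trans (le_of_eq ?_) (measure_mono hsub)
  rw [Measure.addHaar_smul, smul_eq_mul, ← mul_assoc]
  congr 1
  simp only [Module.finrank_fintype_fun_eq_card, Fintype.card_fin]
  rw [abs_of_pos (by positivity), div_pow, div_eq_mul_inv, ENNReal.ofReal_mul (by positivity),
    ENNReal.ofReal_inv_of_pos (by positivity), ENNReal.ofReal_pow hN.le,
    ENNReal.ofReal_pow (by norm_num : (0:ℝ) ≤ 2), ENNReal.inv_pow]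
  simp

lemma KK_volume_gt (m : ℕ) (a : Fin (m+3) → ℤ) (M : ℝ) (hM : 0 < M) (ha : ∀ i, |(a i : ℝ)| ≤ M)
    (j : Fin (m+3)) (hj : |(a j : ℝ)| < M) :
    ∃ N₀ : ℝ, 0 < N₀ ∧ ∀ N, N₀ < N →
      ENNReal.ofReal (N ^ (m+2) * (sigma (m+3) / M)) < volume (KK (m+3) a N) := by
  obtain ⟨δ₀, h0, hδ⟩ := EE_gt m (fun i => a i / M)
    (fun i => by rw [abs_div, abs_of_pos hM]; exact (div_le_one hM).mpr (ha i)) j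
    (by rw [abs_div, abs_of_pos hM]; exact (div_lt_one hM).mpr hj)
  refine ⟨1 / (δ₀ * M), by positivity, fun N hN => ?_⟩
  have hN0 : 0 < N := lt_trans (by positivity) hN
  refine lt_of_lt_of_le ?_ (KK_volume_ge (m+3) (by omega) a N M hN0 hM)
  have h1 : 1 / (N * M) < δ₀ := by
    rw [div_lt_iff₀ (by positivity)] at hN ⊢
    linarith
  have h2 := hδ (1 / (N * M)) (by positivity) h1
  have hs := sigma_pos (m+1)
  rw [ENNReal.ofReal_lt_ofReal_iff_of_nonneg (by positivity)]
  calc N ^ (m+2) * (sigma (m+3) / M) = N ^ (m+3) * (1 / (N * M) * sigma (m+3)) := by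
        field_simp
        ring
    _ < _ := by gcongr


lemma diag_repr {n : ℕ} (b : Module.Basis (Fin n) ℝ (Fin n → ℝ)) (d : Fin n → ℝ) (x : Fin n → ℝ)
    (i : Fin n) : b.repr (Matrix.toLin b b (Matrix.diagonal d) x) i = d i * b.repr x i := by
  have := LinearMap.toMatrix_mulVec_repr b b (Matrix.toLin b b (Matrix.diagonal d)) x
  rw [← congrFun this i, LinearMap.toMatrix_toLin, Matrix.mulVec_diagonal]

lemma squeeze {n : ℕ} (b : Module.Basis (Fin n) ℝ (Fin n → ℝ)) (k : ℕ) (hk : k ≤ n)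
    {K A : Set (Fin n → ℝ)} (hKo : IsOpen K) (hKc : Convex ℝ K) (hA : MeasurableSet A)
    (hAK : A ⊆ K) {θ : ℝ} (h0 : 0 < θ) (h1 : θ ≤ 1) :
    ∃ A' : Set (Fin n → ℝ), MeasurableSet A' ∧ A' ⊆ K ∧
      volume A' = ENNReal.ofReal (θ ^ k) * volume A ∧
      ∀ x ∈ A', ∀ y ∈ A', (∀ i : Fin n, k ≤ i → b.repr (x - y) i = 0) →
        ∃ x' ∈ A, ∃ y' ∈ A, x - y = θ • (x' - y') := by
  set L := Matrix.toLin b b (Matrix.diagonal fun i : Fin n => if (i:ℕ) < k then θ else 1) with hL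
  set P := Matrix.toLin b b (Matrix.diagonal fun i : Fin n => if (i:ℕ) < k then (0:ℝ) else 1) with hP
  have hLr : ∀ x i, b.repr (L x) i = (if (i:ℕ) < k then θ else 1) * b.repr x i :=
    fun x i => diag_repr b _ x i
  have hPr : ∀ x i, b.repr (P x) i = (if (i:ℕ) < k then (0:ℝ) else 1) * b.repr x i :=
    fun x i => diag_repr b _ x i
  have hPL : ∀ x, P (L x) = P x := by
    intro x
    apply b.repr.injective; ext i
    rw [hPr, hPr, hLr]
    split_ifs <;> simp
  have hPP : ∀ x, P (P x) = P x := by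
    intro x
    apply b.repr.injective; ext i
    rw [hPr, hPr]
    split_ifs <;> simp
  have hLP : ∀ x, L x = θ • x + (1 - θ) • P x := by
    intro x
    apply b.repr.injective; ext i
    simp only [map_add, map_smul, Finsupp.add_apply, Finsupp.smul_apply, smul_eq_mul]
    rw [hPr, hLr]
    split_ifs <;> ring
  have hPzero : ∀ x, P x = 0 ↔ ∀ i : Fin n, k ≤ i → b.repr x i = 0 := by
    intro x
    constructor
    · intro h i hi
      have := hPr x i
      rw [h, if_neg (by omega)] at this
      simpa using this.symm
    · intro h
      apply b.repr.injective; ext i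
      rw [hPr]
      split_ifs with hi
      · simp
      · simp [h i (by omega)]
  have hdet : LinearMap.det L = θ ^ k := by
    rw [hL, LinearMap.det_toLin, Matrix.det_diagonal, Finset.prod_ite, Finset.prod_const_one,
      Finset.prod_const, mul_one]
    congr 1
    rw [Fin.card_filter_val_lt]
    omega
  have hdet0 : LinearMap.det L ≠ 0 := by rw [hdet]; positivity
  have hPcont : Continuous P := P.continuous_of_finiteDimensional
  have hLcont : Continuous L := L.continuous_of_finiteDimensional
  have hLinj : Function.Injective L := by
    intro x y hxy
    apply b.repr.injective; ext i
    have := hLr x i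
    rw [hxy, hLr] at this
    split_ifs at this
    · exact (mul_left_cancel₀ h0.ne' this).symm
    · simpa using this.symm
  let q : ℕ → (Fin n → ℝ) := fun j => (TopologicalSpace.denseSeq (LinearMap.ker P) j : Fin n → ℝ)
  have hq : ∀ j, P (q j) = 0 := fun j => (TopologicalSpace.denseSeq (LinearMap.ker P) j).2
  let B : ℕ → Set (Fin n → ℝ) := fun j => {x | q j + P x ∈ K}
  have hBo : ∀ j, MeasurableSet (B j) := fun j =>
    (hKo.preimage (continuous_const.add hPcont)).measurableSet
  have hBcov : ∀ x ∈ K, ∃ j, x ∈ B j := by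
    intro x hx
    have hopen : IsOpen {v : LinearMap.ker P | (v : Fin n → ℝ) + P x ∈ K} :=
      hKo.preimage (continuous_subtype_val.add continuous_const)
    have hne : {v : LinearMap.ker P | (v : Fin n → ℝ) + P x ∈ K}.Nonempty := by
      refine ⟨⟨x - P x, ?_⟩, ?_⟩
      · rw [LinearMap.mem_ker, map_sub, hPP, sub_self]
      · simpa using hx
    obtain ⟨j, hj⟩ := (TopologicalSpace.denseRange_denseSeq (LinearMap.ker P)).exists_mem_open
      hopen hne
    exact ⟨j, hj⟩
  let C : ℕ → Set (Fin n → ℝ) := disjointed B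
  have hCm : ∀ j, MeasurableSet (C j) := fun j => MeasurableSet.disjointed hBo j
  have hCB : ∀ j, C j ⊆ B j := fun j => disjointed_subset B j
  have hCP : ∀ j x y, P x = P y → x ∈ C j → y ∈ C j := by
    intro j x y hxy hx
    simp only [C, disjointed_eq_inter_compl, Set.mem_inter_iff, Set.mem_iInter, Set.mem_compl_iff, B,
      Set.mem_ofPred_eq] at hx ⊢
    rw [← hxy]; exact hx
  have hCd : Pairwise (Function.onFun Disjoint C) := disjoint_disjointed B
  have hCuniq : ∀ i j x, x ∈ C i → x ∈ C j → i = j := by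
    intro i j x hi hj
    by_contra hne
    exact Set.disjoint_left.mp (hCd hne) hi hj
  let Φ : ℕ → (Fin n → ℝ) → (Fin n → ℝ) := fun j x => L x + (1 - θ) • q j
  have hPΦ : ∀ j x, P (Φ j x) = P x := by
    intro j x
    simp only [Φ, map_add, map_smul, hPL, hq, smul_zero, add_zero]
  have hΦinj : ∀ j, Function.Injective (Φ j) := by
    intro j x y hxy
    exact hLinj (add_right_cancel hxy)
  have hΦm : ∀ j, MeasurableSet (Φ j '' (A ∩ C j)) := fun j =>
    (hA.inter (hCm j)).image_of_continuousOn_injOn (by fun_prop) (hΦinj j).injOn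
  have hΦv : ∀ j, volume (Φ j '' (A ∩ C j)) = ENNReal.ofReal (θ ^ k) * volume (A ∩ C j) := by
    intro j
    have e : Φ j '' (A ∩ C j) = (fun x => x + (1 - θ) • q j) '' (L '' (A ∩ C j)) := by
      rw [Set.image_image]
    rw [e, Set.image_add_right, measure_preimage_add_right, Measure.addHaar_image_linearMap, hdet,
      abs_of_pos (by positivity)]
  refine ⟨⋃ j, Φ j '' (A ∩ C j), MeasurableSet.iUnion hΦm, ?_, ?_, ?_⟩
  · intro z hz
    obtain ⟨j, x, ⟨hxA, hxC⟩, rfl⟩ := Set.mem_iUnion.mp hz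
    have e : Φ j x = θ • x + (1 - θ) • (q j + P x) := by
      simp only [Φ, hLP, smul_add]; abel
    rw [e]
    exact hKc (hAK hxA) (hCB j hxC) h0.le (by linarith) (by ring)
  · rw [measure_iUnion _ hΦm]
    · simp_rw [hΦv]
      rw [ENNReal.tsum_mul_left, ← measure_iUnion _ (fun j => hA.inter (hCm j))]
      · congr 2
        rw [← Set.inter_iUnion, iUnion_disjointed]
        apply Set.inter_eq_left.mpr
        intro x hx
        exact Set.mem_iUnion.mpr (hBcov x (hAK hx))
      · intro i j hij
        exact (hCd hij).mono Set.inter_subset_right Set.inter_subset_right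
    · intro i j hij
      rw [Function.onFun, Set.disjoint_left]
      rintro z ⟨x, ⟨_, hx⟩, rfl⟩ ⟨y, ⟨_, hy⟩, hxy⟩
      have : P y = P x := by rw [← hPΦ j y, hxy, hPΦ i x]
      exact hij (hCuniq i j x hx (hCP j y x this hy))
  · rintro _ hx' _ hy' hV
    obtain ⟨i, x, ⟨hxA, hxC⟩, rfl⟩ := Set.mem_iUnion.mp hx'
    obtain ⟨j, y, ⟨hyA, hyC⟩, rfl⟩ := Set.mem_iUnion.mp hy'
    rw [← hPzero, map_sub, hPΦ, hPΦ, sub_eq_zero] at hV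
    have hij : i = j := hCuniq i j y (hCP i x y hV hxC) hyC
    subst hij
    refine ⟨x, hxA, y, hyA, ?_⟩
    simp only [Φ, hLP, hV, smul_sub]
    abel

lemma squeeze_iter {n : ℕ} (b : Module.Basis (Fin n) ℝ (Fin n → ℝ))
    {K : Set (Fin n → ℝ)} (hKo : IsOpen K) (hKc : Convex ℝ K) (μ : ℕ → ℝ)
    (hpos : ∀ i, 0 < μ i) (hmono : Monotone μ) (k : ℕ) (hk : k + 1 ≤ n) :
    ∃ A : Set (Fin n → ℝ), MeasurableSet A ∧ A ⊆ K ∧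
      volume A = ENNReal.ofReal ((∏ i ∈ Finset.range k, μ i) / μ k ^ k) * volume K ∧
      ∀ x ∈ A, ∀ y ∈ A, ∀ i ≤ k, (∀ j : Fin n, i + 1 ≤ j → b.repr (x - y) j = 0) →
        ∃ x' ∈ K, ∃ y' ∈ K, x - y = (μ i / μ k) • (x' - y') := by
  induction k with
  | zero =>
    refine ⟨K, hKo.measurableSet, subset_rfl, by simp, fun x hx y hy i hi _ => ⟨x, hx, y, hy, ?_⟩⟩
    obtain rfl : i = 0 := by omega
    rw [div_self (hpos _).ne', one_smul]
  | succ k ih =>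
    obtain ⟨A, hAm, hAK, hAv, hA⟩ := ih (by omega)
    obtain ⟨A', hAm', hAK', hAv', hA'⟩ := squeeze b (k+1) (by omega) hKo hKc hAm hAK
      (θ := μ k / μ (k+1)) (div_pos (hpos _) (hpos _))
      ((div_le_one (hpos _)).mpr (hmono (Nat.le_succ k)))
    have p0 := hpos k
    have p1 := hpos (k+1)
    refine ⟨A', hAm', hAK', ?_, ?_⟩
    · rw [hAv', hAv, ← mul_assoc, ← ENNReal.ofReal_mul (by positivity), Finset.prod_range_succ]
      congr 2
      rw [div_pow]
      field_simp
      ring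
    · intro x hx y hy i hi hV
      rcases Nat.lt_or_eq_of_le hi with hlt | rfl
      · obtain ⟨x', hx', y', hy', e⟩ := hA' x hx y hy (fun j hj => hV j (by omega))
        obtain ⟨x'', hx'', y'', hy'', e'⟩ := hA x' hx' y' hy' i (by omega) (fun j hj => by
          have := hV j hj
          rw [e, map_smul, Finsupp.smul_apply, smul_eq_mul] at this
          exact (mul_eq_zero.mp this).resolve_left (by positivity))
        refine ⟨x'', hx'', y'', hy'', ?_⟩
        rw [e, e', smul_smul]
        congr 1
        field_simp
      · exact ⟨x, hAK' hx, y, hAK' hy, by rw [div_self p1.ne', one_smul]⟩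


def cv {n : ℕ} (w : Fin n → ℤ) : Fin n → ℝ := fun j => (w j : ℝ)

lemma blichfeldt {n : ℕ} {A : Set (Fin n → ℝ)} (hA : MeasurableSet A) (h : 1 < volume A) :
    ∃ x ∈ A, ∃ y ∈ A, ∃ w : Fin n → ℤ, w ≠ 0 ∧ x - y = cv w := by
  have fund := ZSpan.isAddFundamentalDomain' (Pi.basisFun ℝ (Fin n)) volume
  have hvol : volume (ZSpan.fundamentalDomain (Pi.basisFun ℝ (Fin n))) = 1 := by
    rw [ZSpan.fundamentalDomain_pi_basisFun, volume_pi, Measure.pi_pi]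
    simp
  have : Countable (Submodule.span ℤ (Set.range (Pi.basisFun ℝ (Fin n)))).toAddSubgroup :=
    inferInstanceAs (Countable (Submodule.span ℤ (Set.range (Pi.basisFun ℝ (Fin n)))))
  obtain ⟨u, v, huv, hd⟩ := exists_pair_mem_lattice_not_disjoint_vadd fund hA.nullMeasurableSet
    (by rw [hvol]; exact h)
  obtain ⟨z, ⟨x, hx, hxz⟩, ⟨y, hy, hyz⟩⟩ := Set.not_disjoint_iff.mp hd
  have hz : (u : Fin n → ℝ) + x = (v : Fin n → ℝ) + y := by
    have h1 : (u : Fin n → ℝ) + x = z := hxz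
    have h2 : (v : Fin n → ℝ) + y = z := hyz
    rw [h1, h2]
  have hmem : (v : Fin n → ℝ) - (u : Fin n → ℝ) ∈
      Submodule.span ℤ (Set.range (Pi.basisFun ℝ (Fin n))) := Submodule.sub_mem _ v.2 u.2
  rw [Module.Basis.mem_span_iff_repr_mem] at hmem
  choose w hw using hmem
  have hxy : x - y = (v : Fin n → ℝ) - (u : Fin n → ℝ) := by
    rw [sub_eq_sub_iff_add_eq_add, add_comm x, hz, add_comm]
  refine ⟨x, hx, y, hy, w, ?_, ?_⟩
  · rintro rfl
    apply huv
    apply Subtype.ext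
    symm
    rw [← sub_eq_zero]
    ext i
    have := hw i
    simp at this
    simpa using this.symm
  · rw [hxy]
    ext i
    have := hw i
    simp at this
    simpa [cv] using this.symm

lemma cv_norm {n : ℕ} (w : Fin n → ℤ) : ‖cv w‖ = ((Finset.univ.sup fun i => (w i).natAbs : ℕ) : ℝ) := by
  apply le_antisymm
  · rw [pi_norm_le_iff_of_nonneg (by positivity)]
    intro i
    have : (w i).natAbs ≤ Finset.univ.sup fun i => (w i).natAbs :=
      Finset.le_sup (f := fun i => (w i).natAbs) (Finset.mem_univ i)
    rw [cv, Real.norm_eq_abs, ← Int.cast_abs, Int.abs_eq_natAbs]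
    exact_mod_cast this
  · rcases isEmpty_or_nonempty (Fin n) with he | he
    · simp
    · obtain ⟨i, _, hi⟩ := Finset.exists_mem_eq_sup Finset.univ Finset.univ_nonempty
        (fun i => (w i).natAbs)
      rw [hi]
      have := norm_le_pi_norm (cv w) i
      rw [Nat.cast_natAbs, Int.cast_abs]
      exact this

lemma exists_new {n : ℕ} (a : Fin n → ℤ) (ha : a ≠ 0) (S : Submodule ℝ (Fin n → ℝ))
    (hS : Module.finrank ℝ S + 1 < n) : ∃ w : Fin n → ℤ, ∑ j, a j * w j = 0 ∧ cv w ∉ S := by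
  classical
  by_contra! hcon
  obtain ⟨j, hj⟩ := Function.ne_iff.mp ha
  have hj' : (a j : ℝ) ≠ 0 := by exact_mod_cast hj
  have htop : S ⊔ Submodule.span ℝ {Pi.single j (1:ℝ)} = ⊤ := by
    rw [eq_top_iff, ← (Pi.basisFun ℝ (Fin n)).span_eq, Submodule.span_le]
    rintro _ ⟨i, rfl⟩
    rw [Pi.basisFun_apply]
    have h1 := hcon (fun l => a j * (if l = i then 1 else 0) - a i * (if l = j then 1 else 0)) (by
      simp [mul_sub, Finset.sum_sub_distrib]
      ring)
    have e : (Pi.single i (1:ℝ) : Fin n → ℝ) =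
      (a j : ℝ)⁻¹ • cv (fun l => a j * (if l = i then 1 else 0) - a i * (if l = j then 1 else 0))
        + ((a j : ℝ)⁻¹ * a i) • Pi.single j (1:ℝ) := by
      ext l
      simp only [cv, Pi.add_apply, Pi.smul_apply, smul_eq_mul, Pi.single_apply]
      push_cast
      field_simp
      ring
    rw [e]
    exact Submodule.add_mem_sup (S.smul_mem _ h1)
      (Submodule.smul_mem _ _ (Submodule.mem_span_singleton_self _))
  have h2 := Submodule.finrank_add_le_finrank_add_finrank S (Submodule.span ℝ {Pi.single j (1:ℝ)})
  rw [htop, finrank_top, Module.finrank_fintype_fun_eq_card, Fintype.card_fin] at h2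
  have h3 := finrank_span_singleton (K := ℝ) (v := (Pi.single j (1:ℝ) : Fin n → ℝ)) (by simp)
  omega

lemma greedy {n : ℕ} (a : Fin n → ℤ) (ha : a ≠ 0) (k : ℕ) (hk : k + 1 ≤ n) :
    ∃ x : Fin k → (Fin n → ℤ), LinearIndependent ℝ (fun i => cv (x i)) ∧
      (∀ i, ∑ j, a j * x i j = 0) ∧
      ∀ i, ∀ w : Fin n → ℤ, ∑ j, a j * w j = 0 → ‖cv w‖ < ‖cv (x i)‖ →
        cv w ∈ Submodule.span ℝ {v | ∃ j < i, v = cv (x j)} := by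
  induction k with
  | zero => exact ⟨fun i => i.elim0, linearIndependent_empty_type, fun i => i.elim0, fun i => i.elim0⟩
  | succ k ih =>
    obtain ⟨x, hli, hx, hmin⟩ := ih (by omega)
    set S := Submodule.span ℝ (Set.range fun i => cv (x i)) with hS
    have hfr : Module.finrank ℝ S = k := by
      rw [hS, finrank_span_eq_card hli, Fintype.card_fin]
    obtain ⟨w₀, hw₀⟩ := exists_new a ha S (by omega)
    let f : (Fin n → ℤ) → ℕ := fun w => Finset.univ.sup fun i => (w i).natAbs
    let T : Set (Fin n → ℤ) := {w | ∑ j, a j * w j = 0 ∧ cv w ∉ S}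
    have hne : T.Nonempty := ⟨w₀, hw₀⟩
    obtain ⟨z, hz, hzmin⟩ : ∃ z ∈ T, ∀ w ∈ T, f z ≤ f w :=
      ⟨Function.argminOn f T hne, Function.argminOn_mem f T hne,
        fun w hw => Function.argminOn_le f T hw⟩
    refine ⟨Fin.snoc x z, ?_, ?_, ?_⟩
    · have e : (fun i => cv ((Fin.snoc x z : Fin (k+1) → (Fin n → ℤ)) i)) =
          Fin.snoc (fun i => cv (x i)) (cv z) := by
        ext i : 1
        refine Fin.lastCases ?_ (fun i => ?_) i <;> simp
      rw [e]
      exact linearIndependent_finSnoc.mpr ⟨hli, hz.2⟩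
    · intro i
      refine Fin.lastCases ?_ (fun i => ?_) i
      · simpa using hz.1
      · simpa using hx i
    · intro i
      refine Fin.lastCases ?_ (fun i => ?_) i
      · intro w hw hlt
        rw [Fin.snoc_last, cv_norm, cv_norm, Nat.cast_lt] at hlt
        by_contra hnot
        have : w ∈ T := ⟨hw, fun hmem => hnot (by
          refine Submodule.span_mono ?_ hmem
          rintro _ ⟨j, rfl⟩
          exact ⟨j.castSucc, Fin.castSucc_lt_last j, by simp⟩)⟩
        exact absurd (hzmin w this) (not_le.mpr hlt)
      · intro w hw hlt
        rw [Fin.snoc_castSucc] at hlt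
        refine Submodule.span_mono ?_ (hmin i w hw hlt)
        rintro _ ⟨j, hj, rfl⟩
        exact ⟨j.castSucc, by simpa using hj, by simp⟩

lemma li_int {n k : ℕ} (x : Fin k → (Fin n → ℤ)) (h : LinearIndependent ℝ (fun i => cv (x i))) :
    LinearIndependent ℤ x := by
  have h1 : LinearIndependent ℤ (fun i => cv (x i)) :=
    h.restrict_scalars (by
      intro p q hpq
      simpa using hpq)
  let F : (Fin n → ℤ) →ₗ[ℤ] (Fin n → ℝ) :=
    { toFun := cv
      map_add' := fun u v => by ext i; simp [cv]
      map_smul' := fun c v => by ext i; simp [cv] }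
  exact LinearIndependent.of_comp F h1

lemma KK_open (n : ℕ) (a : Fin n → ℤ) (N : ℝ) : IsOpen (KK n a N) := by
  have h1 : IsOpen {x : Fin n → ℝ | ‖x‖ < N / 2} := isOpen_lt (by fun_prop) (by fun_prop)
  have h2 : IsOpen {x : Fin n → ℝ | |∑ i, (a i : ℝ) * x i| < 1 / 2} :=
    isOpen_lt (by fun_prop) (by fun_prop)
  exact h1.inter h2

lemma KK_convex (n : ℕ) (a : Fin n → ℤ) (N : ℝ) : Convex ℝ (KK n a N) := by
  have h1 : Convex ℝ {x : Fin n → ℝ | ‖x‖ < N / 2} := by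
    have e : {x : Fin n → ℝ | ‖x‖ < N / 2} = Metric.ball 0 (N / 2) := by ext x; simp
    rw [e]
    exact convex_ball _ _
  let F : (Fin n → ℝ) →ₗ[ℝ] ℝ :=
    { toFun := fun x => ∑ i, (a i : ℝ) * x i
      map_add' := fun u v => by simp [mul_add, Finset.sum_add_distrib]
      map_smul' := fun c v => by
        simp only [Pi.smul_apply, smul_eq_mul, RingHom.id_apply, Finset.mul_sum]
        exact Finset.sum_congr rfl fun i _ => by ring }
  have h2 : Convex ℝ {x : Fin n → ℝ | |∑ i, (a i : ℝ) * x i| < 1 / 2} := by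
    have e : {x : Fin n → ℝ | |∑ i, (a i : ℝ) * x i| < 1 / 2} = F ⁻¹' Metric.ball 0 (1 / 2) := by
      ext x; simp [F]
    rw [e]
    exact (convex_ball (0 : ℝ) (1 / 2)).linear_preimage F
  exact h1.inter h2

lemma main_upper {m : ℕ} (a : Fin (m+1) → ℤ) (ha : a ≠ 0) (x : Fin m → (Fin (m+1) → ℤ))
    (hli : LinearIndependent ℝ (fun i => cv (x i))) (hx : ∀ i, ∑ j, a j * x i j = 0)
    (hmin : ∀ i, ∀ w : Fin (m+1) → ℤ, ∑ j, a j * w j = 0 → ‖cv w‖ < ‖cv (x i)‖ →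
        cv w ∈ Submodule.span ℝ {v | ∃ j < i, v = cv (x j)}) (N : ℝ) (hN0 : 0 < N)
    (hN : ∀ i, ‖cv (x i)‖ ≤ N) :
    ENNReal.ofReal ((∏ i, ‖cv (x i)‖) / N ^ m) * volume (KK (m+1) a N) ≤ 1 := by
  -- the linear form
  let F : (Fin (m+1) → ℝ) →ₗ[ℝ] ℝ :=
    { toFun := fun x => ∑ i, (a i : ℝ) * x i
      map_add' := fun u v => by simp [mul_add, Finset.sum_add_distrib]
      map_smul' := fun c v => by
        simp only [Pi.smul_apply, smul_eq_mul, RingHom.id_apply, Finset.mul_sum]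
        exact Finset.sum_congr rfl fun i _ => by ring }
  have hFdef : ∀ v, F v = ∑ i, (a i : ℝ) * v i := fun v => rfl
  have hFcv : ∀ w : Fin (m+1) → ℤ, F (cv w) = ((∑ j, a j * w j : ℤ) : ℝ) := by
    intro w; rw [hFdef]; push_cast; rfl
  have hFx : ∀ i, F (cv (x i)) = 0 := by
    intro i; rw [hFcv, hx i]; simp
  have hFa : F (cv a) ≠ 0 := by
    rw [hFcv]
    have : ∑ j, a j * a j ≠ 0 := by
      intro h0
      rw [Finset.sum_eq_zero_iff_of_nonneg (fun i _ => mul_self_nonneg _)] at h0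
      apply ha
      ext i
      exact mul_self_eq_zero.mp (h0 i (Finset.mem_univ i))
    exact_mod_cast this
  have hspan : ∀ v ∈ Submodule.span ℝ (Set.range fun i => cv (x i)), F v = 0 := by
    intro v hv
    have : Submodule.span ℝ (Set.range fun i => cv (x i)) ≤ LinearMap.ker F := by
      rw [Submodule.span_le]
      rintro _ ⟨i, rfl⟩
      exact hFx i
    exact this hv
  have hliS : LinearIndependent ℝ (Fin.snoc (fun i => cv (x i)) (cv a) : Fin (m+1) → (Fin (m+1) → ℝ)) :=
    linearIndependent_finSnoc.mpr ⟨hli, fun h => hFa (hspan _ h)⟩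
  let b := basisOfLinearIndependentOfCardEqFinrank hliS (by simp)
  have hb : ∀ i, b i = (Fin.snoc (fun i => cv (x i)) (cv a) : Fin (m+1) → (Fin (m+1) → ℝ)) i := by
    intro i; simp [b]
  have hbc : ∀ i : Fin m, b i.castSucc = cv (x i) := by intro i; rw [hb]; simp
  have hbl : b (Fin.last m) = cv a := by rw [hb]; simp
  have hlast : ∀ v, F v = 0 → b.repr v (Fin.last m) = 0 := by
    intro v hv
    have h1 := b.sum_repr v
    rw [← h1, map_sum, Fin.sum_univ_castSucc] at hv
    simp only [map_smul, hbc, hbl, hFx, mul_zero, Finset.sum_const_zero, zero_add, smul_eq_mul] at hv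
    exact (mul_eq_zero.mp hv).resolve_right hFa
  have hmem : ∀ (i : Fin m) v, v ∈ Submodule.span ℝ {v | ∃ j < i, v = cv (x j)} →
      ∀ j : Fin (m+1), (i:ℕ) ≤ j → b.repr v j = 0 := by
    intro i v hv j hj
    have h1 : v ∈ Submodule.span ℝ (b '' {l | (l:ℕ) < i}) := by
      refine Submodule.span_mono ?_ hv
      rintro _ ⟨l, hl, rfl⟩
      exact ⟨l.castSucc, by simpa using hl, hbc l⟩
    rw [Module.Basis.mem_span_image] at h1
    by_contra hne
    have := h1 (Finsupp.mem_support_iff.mpr hne)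
    simp only [Set.mem_ofPred_eq] at this
    omega
  -- the successive minima
  let μ : ℕ → ℝ := fun i => if h : i < m then ‖cv (x ⟨i, h⟩)‖ else N
  have hμ : ∀ i : Fin m, μ i = ‖cv (x i)‖ := by intro i; simp [μ]
  have hμm : μ m = N := by simp [μ]
  have hpos : ∀ i, 0 < μ i := by
    intro i
    simp only [μ]
    split_ifs with h
    · exact norm_pos_iff.mpr (hli.ne_zero ⟨i, h⟩)
    · exact hN0
  have hmono : Monotone μ := by
    intro i j hij
    simp only [μ]
    split_ifs with h1 h2 h2
    · by_contra hlt
      push Not at hlt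
      have h3 := hmem _ _ (hmin ⟨i, h1⟩ (x ⟨j, h2⟩) (hx _) hlt) (Fin.castSucc ⟨j, h2⟩) (by simpa using hij)
      rw [← hbc, b.repr_self] at h3
      simp at h3
    · exact hN _
    · omega
    · exact le_rfl
  obtain ⟨A, hAm, hAK, hAv, hA⟩ := squeeze_iter b (KK_open (m+1) a N) (KK_convex (m+1) a N) μ hpos
    hmono m le_rfl
  have hprod : ∏ i ∈ Finset.range m, μ i = ∏ i, ‖cv (x i)‖ := by
    rw [Finset.prod_range]
    exact Finset.prod_congr rfl fun i _ => hμ i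
  rw [hprod, hμm] at hAv
  rw [← hAv]
  by_contra hgt
  push Not at hgt
  obtain ⟨u, hu, v, hv, w, hw0, hw⟩ := blichfeldt hAm hgt
  have hFw : F (cv w) = 0 := by
    have h1 : |F u| < 1 / 2 := (hAK hu).2
    have h2 : |F v| < 1 / 2 := (hAK hv).2
    have h3 : |F (cv w)| < 1 := by
      rw [← hw, map_sub]
      refine (abs_sub _ _).trans_lt ?_
      linarith
    rw [hFcv] at h3 ⊢
    have h4 : |∑ j, a j * w j| < 1 := by exact_mod_cast h3
    rw [Int.abs_lt_one_iff] at h4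
    rw [h4]; simp
  have haw : ∑ j, a j * w j = 0 := by
    rw [hFcv] at hFw; exact_mod_cast hFw
  -- descend
  have hdesc : ∀ i : ℕ, i ≤ m → ∀ j : Fin (m+1), m - i ≤ j → b.repr (cv w) j = 0 := by
    intro i
    induction i with
    | zero =>
      intro _ j hj
      have : j = Fin.last m := by
        apply Fin.ext; simp; omega
      rw [this]; exact hlast _ hFw
    | succ i ih =>
      intro hi j hj
      have hlt : m - (i+1) < m := by omega
      obtain ⟨u', hu', v', hv', e⟩ := hA u hu v hv (m - (i+1)) (by omega) (fun l hl => by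
        rw [hw]; exact ih (by omega) l (by omega))
      rw [hw] at e
      have hnorm : ‖cv w‖ < ‖cv (x ⟨m - (i+1), hlt⟩)‖ := by
        rw [← hμ ⟨m - (i+1), hlt⟩, e, norm_smul, hμm, Real.norm_of_nonneg
          (div_pos (hpos _) hN0).le]
        have h1 : ‖u' - v'‖ < N := by
          refine (norm_sub_le _ _).trans_lt ?_
          linarith [hu'.1, hv'.1]
        have h2 := hpos (m - (i+1))
        calc μ (m - (i+1)) / N * ‖u' - v'‖ < μ (m - (i+1)) / N * N := by gcongr
          _ = μ (m - (i+1)) := by field_simp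
      exact hmem _ _ (hmin _ w haw hnorm) j hj
  apply hw0
  have hz : cv w = 0 := by
    apply b.repr.injective
    ext j
    rw [hdesc m le_rfl j (by omega)]
    simp
  ext i
  have := congrFun hz i
  simpa [cv] using this

lemma equal_case (m : ℕ) (a : Fin (m+3) → ℤ) (M : ℤ) (hM : 0 < M) (ha : ∀ i, |a i| = M) :
    ∃ x : Fin (m+2) → (Fin (m+3) → ℤ), LinearIndependent ℤ x ∧
      (∀ i, ∑ j, a j * x i j = 0) ∧ ∏ i, ‖cv (x i)‖ ≤ 1 := by
  have hsq : ∀ i, a i * (a i).sign = M := fun i => by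
    rw [← ha i, mul_comm, Int.sign_mul_self_eq_abs]
  have hne : ∀ i, a i ≠ 0 := fun i h0 => by
    have := ha i; rw [h0] at this; simp at this; omega
  have hsabs : ∀ i, |(a i).sign| = 1 := fun i => by
    rcases lt_or_gt_of_ne (hne i) with h | h
    · rw [Int.sign_eq_neg_one_of_neg h]; simp
    · rw [Int.sign_eq_one_of_pos h]; simp
  let x : Fin (m+2) → (Fin (m+3) → ℤ) := fun i =>
    Pi.single 0 (a 0).sign - Pi.single i.succ (a i.succ).sign
  refine ⟨x, ?_, ?_, ?_⟩
  · rw [Fintype.linearIndependent_iff]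
    intro g hg i
    have := congrFun hg i.succ
    simp only [x, Finset.sum_apply, Pi.smul_apply, Pi.sub_apply, smul_eq_mul, Pi.zero_apply] at this
    rw [Finset.sum_eq_single i] at this
    · simp at this
      exact this.resolve_right (hne _)
    · intro j _ hj
      have h1 : (Fin.succ i) ≠ Fin.succ j := fun h => hj (Fin.succ_injective _ h).symm
      simp [Pi.single_apply, h1]
    · simp
  · intro i
    simp only [x, Pi.sub_apply, mul_sub, Finset.sum_sub_distrib, Pi.single_apply, mul_ite, mul_zero]
    simp [hsq]
  · apply Finset.prod_le_one (fun i _ => norm_nonneg _)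
    intro i _
    rw [pi_norm_le_iff_of_nonneg zero_le_one]
    intro j
    rw [cv, Real.norm_eq_abs, ← Int.cast_abs]
    have : |x i j| ≤ 1 := by
      simp only [x, Pi.sub_apply, Pi.single_apply]
      by_cases h0 : j = 0
      · subst h0
        rw [if_pos rfl, if_neg (Fin.succ_ne_zero i).symm, sub_zero, hsabs]
      · rw [if_neg h0]
        split_ifs
        · rw [zero_sub, abs_neg, hsabs]
        · simp
    exact_mod_cast this

theorem siegel_lemma_product (n : ℕ) (hn : 5 ≤ n) (a : Fin n → ℤ) (ha : a ≠ 0) :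
    ∃ x : Fin (n - 1) → (Fin n → ℤ), LinearIndependent ℤ x ∧
      (∀ i, ∑ j, a j * x i j = 0) ∧
      (∏ i, ‖(fun j => (x i j : ℝ))‖) < ‖(fun j => (a j : ℝ))‖ / sigma n := by
  obtain ⟨m, rfl⟩ : ∃ m, n = m + 3 := ⟨n - 3, by omega⟩
  change ∃ x : Fin (m + 2) → (Fin (m + 3) → ℤ), LinearIndependent ℤ x ∧
      (∀ i, ∑ j, a j * x i j = 0) ∧ (∏ i, ‖cv (x i)‖) < ‖cv a‖ / sigma (m + 3)
  have hs := sigma_pos (m+1)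
  have hs1 := sigma_lt_one m
  have hcva : cv a ≠ 0 := by
    intro h
    apply ha
    ext i
    have := congrFun h i
    simpa [cv] using this
  have hM : 0 < ‖cv a‖ := norm_pos_iff.mpr hcva
  have hle : ∀ i, |(a i : ℝ)| ≤ ‖cv a‖ := fun i => norm_le_pi_norm (cv a) i
  by_cases hall : ∀ i, |(a i : ℝ)| = ‖cv a‖
  · have hMi : ‖cv a‖ = ((|a 0| : ℤ) : ℝ) := by rw [← hall 0, Int.cast_abs]
    have hM1 : 0 < |a 0| := by
      rw [hMi] at hM; exact_mod_cast hM
    obtain ⟨x, h1, h2, h3⟩ := equal_case m a |a 0| hM1 (fun i => by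
      have := hall i
      rw [hMi, ← Int.cast_abs] at this
      exact_mod_cast this)
    refine ⟨x, h1, h2, h3.trans_lt ?_⟩
    rw [lt_div_iff₀ hs, one_mul, hMi]
    have : (1:ℝ) ≤ ((|a 0| : ℤ) : ℝ) := by exact_mod_cast hM1
    linarith
  · push Not at hall
    obtain ⟨j, hj⟩ := hall
    obtain ⟨N₀, hN₀, hvol⟩ := KK_volume_gt m a ‖cv a‖ hM hle j (lt_of_le_of_ne (hle j) hj)
    obtain ⟨x, hli, hx, hmin⟩ := greedy a ha (m+2) le_rfl
    refine ⟨x, li_int x hli, hx, ?_⟩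
    set N := N₀ + 1 + ∑ i, ‖cv (x i)‖ with hNdef
    have hsum : 0 ≤ ∑ i, ‖cv (x i)‖ := Finset.sum_nonneg fun i _ => norm_nonneg _
    have hN0 : 0 < N := by linarith
    have hup := main_upper a ha x hli hx hmin N hN0 (fun i => by
      have := Finset.single_le_sum (f := fun i => ‖cv (x i)‖) (fun i _ => norm_nonneg _)
        (Finset.mem_univ i)
      linarith)
    have hlow := hvol N (by linarith)
    have hpp : 0 < ∏ i, ‖cv (x i)‖ := Finset.prod_pos fun i _ => norm_pos_iff.mpr (hli.ne_zero i)
    by_contra hcon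
    push Not at hcon
    rw [div_le_iff₀ hs] at hcon
    have hq : 0 < (∏ i, ‖cv (x i)‖) / N ^ (m+2) := by positivity
    have h1 : ENNReal.ofReal ((∏ i, ‖cv (x i)‖) / N ^ (m+2)) *
        ENNReal.ofReal (N ^ (m+2) * (sigma (m+3) / ‖cv a‖)) < 1 := by
      refine lt_of_lt_of_le ?_ hup
      exact ENNReal.mul_lt_mul_right (by simpa using hq) (by simp) hlow
    rw [← ENNReal.ofReal_mul hq.le, ENNReal.ofReal_lt_one] at h1
    have h2 : (∏ i, ‖cv (x i)‖) / N ^ (m+2) * (N ^ (m+2) * (sigma (m+3) / ‖cv a‖))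
        = (∏ i, ‖cv (x i)‖) * sigma (m+3) / ‖cv a‖ := by
      field_simp
    rw [h2, div_lt_one hM] at h1
    linarith
end
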